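/- (Theorem 18) Let 0 < θ₀ < θ₁ < 1, 0 < q₁, r, r₁, r₀ ≤ ∞, a, a₁, b₀, b₁ ∈ SV, and ‖s^{-1/r₁} b₁(s)/a₁(s)‖_{r₁,(1,∞)} < ∞. Put c₁(t) = a₁(t) ‖s^{-1/r₁} b₁(s)/a₁(s)‖_{r₁,(t,∞)} and ρ(t) = t^{θ₁-θ₀} b₀(t)/c₁(t). (i) If 0 < θ < 1 then (Ā_{θ₀,r₀;b₀}, Ā^𝓛_{θ₁,r₁,b₁,q₁,a₁})_{θ,r;a} ≅ Ā_{η,r;a^#}, where η = (1-θ)θ₀ + θθ₁ and a^#(t) = b₀(t)^{1-θ} c₁(t)^θ a(ρ(t)). (ii) If additionally ‖s^{-1/r} a(s)‖_{r,(1,∞)} < ∞, then (Ā_{θ₀,r₀;b₀}, Ā^𝓛_{θ₁,r₁,b₁,q₁,a₁})_{0,r;a} ≅ Ā^𝓛_{θ₀,r,a^#,r₀,b₀}, where a^#(t) = b₀(t) a(ρ(t)). -/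

import Mathlib

open MeasureTheory Set ENNReal Filter

noncomputable section

/-- The `L_q` quasi-norm (with respect to Lebesgue measure) of an `ℝ≥0∞`-valued
function over a set of reals; for `q = ∞` it is the essential supremum. -/
def LqNorm (q : ℝ≥0∞) (s : Set ℝ) (g : ℝ → ℝ≥0∞) : ℝ≥0∞ :=
  if q = ∞ then essSup g (volume.restrict s)
  else (∫⁻ t in s, g t ^ q.toReal) ^ q⁻¹.toReal

/-- The weight `s ↦ s ^ (-1/r) * b s`, as an `ℝ≥0∞`-valued function
(`1/∞ = 0` by convention). -/
def svWgt (r : ℝ≥0∞) (b : ℝ → ℝ) : ℝ → ℝ≥0∞ :=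
  fun s => ENNReal.ofReal (s ^ (-(r⁻¹.toReal)) * b s)

/-- `f` and `g` are equivalent on `s`: each is bounded by a constant multiple
of the other there. -/
def EquivOn (s : Set ℝ) (f g : ℝ → ℝ) : Prop :=
  ∃ C : ℝ, 0 < C ∧ ∀ t ∈ s, C⁻¹ * g t ≤ f t ∧ f t ≤ C * g t

/-- A positive measurable function `b` on `(0,∞)` is slowly varying if for every
`ε > 0`, `t ^ ε * b t` is equivalent to a non-decreasing function and
`t ^ (-ε) * b t` is equivalent to a non-increasing function. -/
def SlowlyVarying (b : ℝ → ℝ) : Prop :=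
  AEMeasurable b (volume.restrict (Ioi 0)) ∧ (∀ t ∈ Ioi (0:ℝ), 0 < b t) ∧
    ∀ ε : ℝ, 0 < ε →
      (∃ g : ℝ → ℝ, MonotoneOn g (Ioi 0) ∧ EquivOn (Ioi 0) (fun t => t ^ ε * b t) g) ∧
      (∃ g : ℝ → ℝ, AntitoneOn g (Ioi 0) ∧ EquivOn (Ioi 0) (fun t => t ^ (-ε) * b t) g)

/-- A quasi-Banach space continuously embedded into the ambient (Hausdorff) space `E`,
recorded via its extended-real-valued quasi-norm; the space itself is the set of
vectors of finite quasi-norm. -/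
structure QuasiBanach (E : Type*) [AddCommGroup E] [Module ℝ E] where
  N : E → ℝ≥0∞
  zero : N 0 = 0
  definite : ∀ x, N x = 0 → x = 0
  smul : ∀ (c : ℝ) (x : E), N (c • x) = ENNReal.ofReal |c| * N x
  quasi : ∃ C : ℝ≥0∞, 1 ≤ C ∧ C ≠ ∞ ∧ ∀ x y, N (x + y) ≤ C * (N x + N y)
  complete : ∀ f : ℕ → E,
    (∀ ε : ℝ≥0∞, 0 < ε → ∃ M : ℕ, ∀ m ≥ M, ∀ n ≥ M, N (f m - f n) < ε) →
    (∀ n, N (f n) ≠ ∞) →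
    ∃ g : E, N g ≠ ∞ ∧ Tendsto (fun n => N (f n - g)) atTop (nhds 0)

variable {E : Type*} [AddCommGroup E] [Module ℝ E]

/-- The Peetre K-functional of the couple whose quasi-norms are `N₀`, `N₁`. -/
def Kf (N₀ N₁ : E → ℝ≥0∞) (t : ℝ) (f : E) : ℝ≥0∞ :=
  ⨅ g : E, N₀ g + ENNReal.ofReal t * N₁ (f - g)

/-- The quasi-norm of the real interpolation space `Ā_{θ,q;b}`. -/
def normK (N₀ N₁ : E → ℝ≥0∞) (θ : ℝ) (q : ℝ≥0∞) (b : ℝ → ℝ) (f : E) : ℝ≥0∞ :=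
  LqNorm q (Ioi 0) fun u =>
    ENNReal.ofReal (u ^ (-θ - q⁻¹.toReal) * b u) * Kf N₀ N₁ u f

/-- The quasi-norm of the limiting interpolation space `Ā^𝓛_{σ,r,b,q,a}`. -/
def normL (N₀ N₁ : E → ℝ≥0∞) (σ : ℝ) (r q : ℝ≥0∞) (b a : ℝ → ℝ) (f : E) : ℝ≥0∞ :=
  LqNorm r (Ioi 0) fun t =>
    ENNReal.ofReal (t ^ (-(r⁻¹.toReal)) * (b t / a t)) *
      LqNorm q (Ioo 0 t) fun u =>
        ENNReal.ofReal (u ^ (-σ - q⁻¹.toReal) * a u) * Kf N₀ N₁ u f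

/-- The quasi-norm of the limiting interpolation space `Ā^𝓡_{σ,r,b,q,a}`. -/
def normR (N₀ N₁ : E → ℝ≥0∞) (σ : ℝ) (r q : ℝ≥0∞) (b a : ℝ → ℝ) (f : E) : ℝ≥0∞ :=
  LqNorm r (Ioi 0) fun t =>
    ENNReal.ofReal (t ^ (-(r⁻¹.toReal)) * (b t / a t)) *
      LqNorm q (Ioi t) fun u =>
        ENNReal.ofReal (u ^ (-σ - q⁻¹.toReal) * a u) * Kf N₀ N₁ u f

/-- Two (extended-real-valued) quasi-norms define the same space with
equivalent quasi-norms. -/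
def EquivNorms (nX nY : E → ℝ≥0∞) : Prop :=
  ∃ C : ℝ≥0∞, 0 < C ∧ C ≠ ∞ ∧ ∀ f : E, C⁻¹ * nY f ≤ nX f ∧ nX f ≤ C * nY f

/- All quasi-norms are sampled on a geometric grid `x k` on which `ρ (x k)` is geometric too, and
become weighted `ℓ_q` quasi-norms of the sequence `K(x k, f)`. Write `f = g + (f - g)` with `g`
nearly optimal for `K(x k, f)`. Since `K(x j, g)` is governed by `K(x j, f)` for `j ≤ k`, and
`K(x j, f - g)` by `K(x j, f)` for `j ≥ k`, a Holmstedt-type formula follows: up to constants,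
`K(ρ (x k), f)` for the couple of interpolation spaces lies between the `r₀`-norm `I k` of
`x j ^ (-θ₀) b₀(x j) K(x j, f)` over `j ≤ k` and `I k` plus a tail over `j ≥ k` plus a pointwise
term. As `θ < 1`, Hardy's inequality for geometrically growing weights absorbs the tail into `I`.
For `θ > 0` the dual inequality reduces `I k` itself to its last term, which gives the
`K`-space; for `θ = 0` the weight no longer decays, and `I` stays, which gives the `𝓛`-space. -/

open scoped NNReal

/-- Domination of families of extended nonnegative quantities, up to a constant that does not
depend on the index. -/
def Dominated {ι : Type*} (X Y : ι → ℝ≥0∞) : Prop := ∃ C : ℝ≥0, ∀ i, X i ≤ C * Y i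

infix:50 " ≲ " => Dominated

/-- Comparability of families up to multiplicative constants: domination both ways. -/
def Comparable {ι : Type*} (X Y : ι → ℝ≥0∞) : Prop := X ≲ Y ∧ Y ≲ X

infix:50 " ∼ " => Comparable

section Dominated

variable {ι ι' : Type*} {X Y Z W : ι → ℝ≥0∞}

theorem Dominated.of_le (h : ∀ i, X i ≤ Y i) : X ≲ Y := ⟨1, by simpa using h⟩

theorem Dominated.rfl : X ≲ X := .of_le fun _ => le_rfl

theorem Dominated.trans (hXY : X ≲ Y) (hYZ : Y ≲ Z) : X ≲ Z := by
  obtain ⟨C, hC⟩ := hXY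
  obtain ⟨D, hD⟩ := hYZ
  refine ⟨C * D, fun i => (hC i).trans ?_⟩
  calc C * Y i ≤ C * (D * Z i) := by gcongr; exact hD i
    _ = ↑(C * D) * Z i := by rw [coe_mul, mul_assoc]

theorem Dominated.add (hX : X ≲ Z) (hY : Y ≲ Z) : (fun i => X i + Y i) ≲ Z := by
  obtain ⟨C, hC⟩ := hX
  obtain ⟨D, hD⟩ := hY
  exact ⟨C + D, fun i => by simpa only [coe_add, add_mul] using add_le_add (hC i) (hD i)⟩

theorem Dominated.mul (hXY : X ≲ Y) (hZW : Z ≲ W) :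
    (fun i => X i * Z i) ≲ fun i => Y i * W i := by
  obtain ⟨C, hC⟩ := hXY
  obtain ⟨D, hD⟩ := hZW
  refine ⟨C * D, fun i => (mul_le_mul' (hC i) (hD i)).trans_eq ?_⟩
  rw [coe_mul, mul_mul_mul_comm]

theorem Dominated.comp (hXY : X ≲ Y) (e : ι' → ι) : (fun i => X (e i)) ≲ fun i => Y (e i) :=
  hXY.imp fun _ hC i => hC (e i)

theorem Comparable.rfl : X ∼ X := ⟨.rfl, .rfl⟩

theorem Comparable.symm (h : X ∼ Y) : Y ∼ X := And.symm h

theorem Comparable.trans (hXY : X ∼ Y) (hYZ : Y ∼ Z) : X ∼ Z :=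
  ⟨hXY.1.trans hYZ.1, hYZ.2.trans hXY.2⟩

theorem Comparable.mul (hXY : X ∼ Y) (hZW : Z ∼ W) :
    (fun i => X i * Z i) ∼ fun i => Y i * W i :=
  ⟨hXY.1.mul hZW.1, hXY.2.mul hZW.2⟩

theorem Comparable.comp (hXY : X ∼ Y) (e : ι' → ι) : (fun i => X (e i)) ∼ fun i => Y (e i) :=
  ⟨hXY.1.comp e, hXY.2.comp e⟩

theorem Comparable.equivNorms (h : X ∼ Y) : EquivNorms X Y := by
  obtain ⟨⟨C, hC⟩, ⟨D, hD⟩⟩ := h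
  refine ⟨C + D + 1, by positivity, by simp, fun f => ⟨?_, (hC f).trans ?_⟩⟩
  · rw [ENNReal.inv_mul_le_iff (by positivity) (by simp)]
    exact (hD f).trans (by gcongr; rw [add_right_comm]; exact le_add_self)
  · gcongr
    rw [add_assoc]
    exact le_self_add

end Dominated

/-- The `ℓ_q` quasi-norm of a two-sided sequence over a set of indices, the discrete counterpart of
`LqNorm`. -/
def lqNorm (q : ℝ≥0∞) (T : Set ℤ) (y : ℤ → ℝ≥0∞) : ℝ≥0∞ := eLpNorm y q (Measure.count.restrict T)

section lqNorm

variable {q : ℝ≥0∞} {S T : Set ℤ} {y z : ℤ → ℝ≥0∞}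

theorem lqNorm_eq_indicator : lqNorm q T y = lqNorm q univ (T.indicator y) := by
  rw [lqNorm, lqNorm, Measure.restrict_univ,
    eLpNorm_indicator_eq_eLpNorm_restrict (MeasurableSet.of_discrete)]

theorem lqNorm_top_univ : lqNorm ∞ univ y = ⨆ k, y k := by
  simp only [lqNorm, Measure.restrict_univ, eLpNorm_exponent_top, eLpNormEssSup, essSup_count,
    enorm_eq_self]

theorem lqNorm_univ (hq : q ≠ 0) (hq_top : q ≠ ∞) :
    lqNorm q univ y = (∑' k, y k ^ q.toReal) ^ (1 / q.toReal) := by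
  simp only [lqNorm, Measure.restrict_univ, eLpNorm_eq_lintegral_rpow_enorm_toReal hq hq_top,
    lintegral_count, enorm_eq_self]

theorem lqNorm_mono_set (hST : S ⊆ T) : lqNorm q S y ≤ lqNorm q T y :=
  eLpNorm_mono_measure y (Measure.restrict_mono_set _ hST)

theorem lqNorm_le_mul {C : ℝ≥0} (h : ∀ k ∈ T, y k ≤ C * z k) :
    lqNorm q T y ≤ C * lqNorm q T z := by
  refine eLpNorm_le_nnreal_smul_eLpNorm_of_ae_le_mul' (ae_restrict_of_forall_mem .of_discrete ?_) q
  simpa only [enorm_eq_self] using h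

theorem lqNorm_mono (h : ∀ k ∈ T, y k ≤ z k) : lqNorm q T y ≤ lqNorm q T z := by
  simpa using lqNorm_le_mul (C := 1) (q := q) (by simpa using h)

theorem lqNorm_congr (h : ∀ k ∈ T, y k = z k) : lqNorm q T y = lqNorm q T z :=
  (lqNorm_mono fun k hk => (h k hk).le).antisymm (lqNorm_mono fun k hk => (h k hk).ge)

theorem lqNorm_add_le (q : ℝ≥0∞) (T : Set ℤ) (y z : ℤ → ℝ≥0∞) :
    lqNorm q T (fun k => y k + z k) ≤ LpAddConst q * (lqNorm q T y + lqNorm q T z) :=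
  eLpNorm_add_le' .of_discrete .of_discrete q

theorem lqNorm_const_mul (hq : q ≠ 0) (c : ℝ≥0∞) :
    lqNorm q T (fun k => c * y k) = c * lqNorm q T y := by
  have hind : T.indicator (fun k => c * y k) = fun k => c * T.indicator y k :=
    funext fun k => indicator_const_mul _ _ _ k
  rw [lqNorm_eq_indicator, hind, lqNorm_eq_indicator (y := y)]
  rcases eq_or_ne q ∞ with rfl | hq_top
  · simp only [lqNorm_top_univ, ENNReal.mul_iSup]
  · have hq_pos : 0 < q.toReal := ENNReal.toReal_pos hq hq_top
    simp only [lqNorm_univ hq hq_top, ENNReal.mul_rpow_of_nonneg _ _ hq_pos.le,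
      ENNReal.tsum_mul_left]
    rw [ENNReal.mul_rpow_of_nonneg _ _ (by positivity), one_div, ENNReal.rpow_rpow_inv hq_pos.ne']

theorem le_lqNorm (hq : q ≠ 0) {k : ℤ} (hk : k ∈ T) : y k ≤ lqNorm q T y := by
  have h := enorm_le_eLpNorm_count (T.indicator y) k hq
  rwa [enorm_eq_self, indicator_of_mem hk,
    eLpNorm_indicator_eq_eLpNorm_restrict .of_discrete] at h

theorem lqNorm_comp_equiv (e : ℤ ≃ ℤ) : lqNorm q (e ⁻¹' T) (fun k => y (e k)) = lqNorm q T y := by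
  rw [lqNorm_eq_indicator, lqNorm_eq_indicator (y := y)]
  change lqNorm q univ (fun k => T.indicator y (e k)) = _
  rcases eq_or_ne q 0 with rfl | hq
  · simp only [lqNorm, eLpNorm_exponent_zero]
  rcases eq_or_ne q ∞ with rfl | hq_top
  · simp only [lqNorm_top_univ]
    exact e.iSup_comp (g := T.indicator y)
  · simp only [lqNorm_univ hq hq_top]
    rw [e.tsum_eq fun k => T.indicator y k ^ q.toReal]

theorem lqNorm_lqNorm_comm (F : ℤ → ℤ → ℝ≥0∞) :
    lqNorm q univ (fun k => lqNorm q univ fun j => F k j) =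
      lqNorm q univ (fun j => lqNorm q univ fun k => F k j) := by
  rcases eq_or_ne q 0 with rfl | hq
  · simp [lqNorm]
  rcases eq_or_ne q ∞ with rfl | hq_top
  · simp only [lqNorm_top_univ]
    exact iSup_comm
  · have hq_pos : 0 < q.toReal := ENNReal.toReal_pos hq hq_top
    simp only [lqNorm_univ hq hq_top, one_div, ENNReal.rpow_inv_rpow hq_pos.ne']
    rw [ENNReal.tsum_comm]

end lqNorm

theorem Dominated.lqNorm_mul {ι : Type*} {X Y : ι → ℤ → ℝ≥0∞}
    (h : (fun i : ι × ℤ => X i.1 i.2) ≲ fun i => Y i.1 i.2) (q : ℝ≥0∞) (v : ℤ → ℝ≥0∞) :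
    (fun i => lqNorm q univ fun k => v k * X i k) ≲
      fun i => lqNorm q univ fun k => v k * Y i k :=
  h.imp fun _ hC i => lqNorm_le_mul fun k _ => by
    rw [mul_left_comm]
    exact mul_le_mul_right (hC (i, k)) _

theorem Dominated.lqNorm_mul_add {ι : Type*} {X Y : ι → ℤ → ℝ≥0∞} {Z : ι → ℝ≥0∞} {q : ℝ≥0∞}
    {v : ℤ → ℝ≥0∞} (hX : (fun i => lqNorm q univ fun k => v k * X i k) ≲ Z)
    (hY : (fun i => lqNorm q univ fun k => v k * Y i k) ≲ Z) :
    (fun i => lqNorm q univ fun k => v k * (X i k + Y i k)) ≲ Z := by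
  refine .trans ⟨(LpAddConst q).toNNReal, fun i => ?_⟩ (hX.add hY)
  rw [coe_toNNReal (LpAddConst_lt_top q).ne]
  simp only [mul_add (v _)]
  exact lqNorm_add_le q univ _ _

section Geometric

variable {ι : Type*} {p q : ℝ≥0∞} {v : ℤ → ℝ≥0∞} {γ : ℝ≥0}

theorem lqNorm_geometric_ne_top (hγ : γ < 1) (q : ℝ≥0∞) :
    lqNorm q univ (fun n => (γ : ℝ≥0∞) ^ n.natAbs) ≠ ∞ := by
  rcases eq_or_ne q 0 with rfl | hq
  · simp [lqNorm]
  rcases eq_or_ne q ∞ with rfl | hq_top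
  · rw [lqNorm_top_univ]
    refine ne_top_of_le_ne_top one_ne_top (iSup_le fun n => pow_le_one' ?_ _)
    exact_mod_cast hγ.le
  · have hq_pos : 0 < q.toReal := ENNReal.toReal_pos hq hq_top
    have hγq : γ ^ q.toReal < 1 := NNReal.rpow_lt_one hγ hq_pos
    have hterm : ∀ n : ℤ, ((γ : ℝ≥0∞) ^ n.natAbs) ^ q.toReal = ↑((γ ^ q.toReal) ^ n.natAbs) := by
      intro n
      rw [coe_pow, ENNReal.coe_rpow_of_nonneg _ hq_pos.le, ← ENNReal.rpow_natCast,
        ← ENNReal.rpow_mul, mul_comm, ENNReal.rpow_mul, ENNReal.rpow_natCast]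
    have hsum : Summable fun n : ℤ => (γ ^ q.toReal) ^ n.natAbs := by
      rw [← NNReal.summable_coe]
      have hgeom := NNReal.summable_coe.2 (NNReal.summable_geometric hγq)
      exact .of_nat_of_neg (by simpa using hgeom) (by simpa using hgeom)
    rw [lqNorm_univ hq hq_top]
    simp only [hterm]
    exact ENNReal.rpow_ne_top_of_nonneg (by positivity)
      (ENNReal.tsum_coe_ne_top_iff_summable.2 hsum)

theorem exists_lqNorm_geometric_le (hγ : γ < 1) (q : ℝ≥0∞) :
    ∃ C : ℝ≥0, ∀ k, lqNorm q univ (fun j => (γ : ℝ≥0∞) ^ (j - k).natAbs) = C := by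
  refine ⟨_, fun k => Eq.trans ?_ (coe_toNNReal (lqNorm_geometric_ne_top hγ q)).symm⟩
  exact lqNorm_comp_equiv (T := univ) (y := fun n : ℤ => (γ : ℝ≥0∞) ^ n.natAbs) (Equiv.subRight k)

theorem lqNorm_dominated_of_geometric (hq : q ≠ 0) (hγ : γ < 1) {C : ℝ≥0} {T : ι → Set ℤ}
    {Y : ι → ℤ → ℝ≥0∞} {c : ι → ℤ} {w : ι → ℝ≥0∞}
    (h : ∀ i, ∀ j ∈ T i, Y i j ≤ C * (γ ^ (j - c i).natAbs * w i)) :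
    (fun i => lqNorm q (T i) (Y i)) ≲ w := by
  obtain ⟨D, hD⟩ := exists_lqNorm_geometric_le hγ q
  refine ⟨C * D, fun i => ?_⟩
  calc lqNorm q (T i) (Y i)
      ≤ lqNorm q (T i) fun j => C * w i * γ ^ (j - c i).natAbs :=
        lqNorm_mono fun j hj => (h i j hj).trans_eq (by ring)
    _ ≤ C * w i * D := by
        rw [lqNorm_const_mul hq, ← hD (c i)]
        gcongr
        exact lqNorm_mono_set (subset_univ _)
    _ = ↑(C * D) * w i := by rw [coe_mul]; ring

theorem lqNorm_geometric_convolution (hp : p ≠ 0) (hq : q ≠ 0) (hγ : γ < 1) :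
    (fun z => lqNorm q univ fun k => lqNorm p univ fun j => γ ^ (j - k).natAbs * z j) ≲
      fun z => lqNorm q univ z := by
  have hδ : NNReal.sqrt γ < 1 := by simpa using NNReal.sqrt_lt_sqrt.2 hγ
  have hsq : ∀ n : ℕ, (γ : ℝ≥0∞) ^ n = (NNReal.sqrt γ : ℝ≥0∞) ^ n * (NNReal.sqrt γ : ℝ≥0∞) ^ n := by
    intro n
    rw [← mul_pow, ← coe_mul, NNReal.mul_self_sqrt]
  generalize NNReal.sqrt γ = δ at hδ hsq
  obtain ⟨C, hC⟩ := exists_lqNorm_geometric_le hδ p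
  obtain ⟨D, hD⟩ := exists_lqNorm_geometric_le hδ q
  -- Half of the geometric factor is spent on passing from `ℓ_p` to `ℓ_q`; Tonelli does the rest.
  have hpq : ∀ (z : ℤ → ℝ≥0∞) k, lqNorm p univ (fun j => γ ^ (j - k).natAbs * z j) ≤
      C * lqNorm q univ fun j => δ ^ (j - k).natAbs * z j := by
    intro z k
    rw [← hC k, mul_comm, ← lqNorm_const_mul hp]
    refine lqNorm_mono fun j _ => ?_
    rw [hsq, mul_assoc, mul_comm]
    gcongr
    exact le_lqNorm (y := fun j => (δ : ℝ≥0∞) ^ (j - k).natAbs * z j) hq (mem_univ j)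
  refine ⟨C * D, fun z => ?_⟩
  calc _ ≤ C * lqNorm q univ fun k => lqNorm q univ fun j => δ ^ (j - k).natAbs * z j :=
        lqNorm_le_mul fun k _ => hpq z k
    _ = C * lqNorm q univ fun j => D * z j := by
        have hD' : ∀ j, lqNorm q univ (fun k => (δ : ℝ≥0∞) ^ (j - k).natAbs) = D := fun j => by
          rw [← hD j]
          exact lqNorm_congr fun k _ => by rw [← Int.natAbs_neg, neg_sub]
        rw [lqNorm_lqNorm_comm]
        simp only [mul_comm _ (z _), lqNorm_const_mul hq, hD']
    _ = ↑(C * D) * lqNorm q univ z := by rw [lqNorm_const_mul hq, coe_mul, mul_assoc]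

theorem lqNorm_hardy (hp : p ≠ 0) (hq : q ≠ 0) (hγ : γ < 1) {C : ℝ≥0} {T : ℤ → Set ℤ}
    (h : ∀ k, ∀ j ∈ T k, v k ≤ C * (γ ^ (j - k).natAbs * v j)) :
    (fun y => lqNorm q univ fun k => v k * lqNorm p (T k) y) ≲
      fun y => lqNorm q univ fun k => v k * y k := by
  have hconv := (lqNorm_geometric_convolution hp hq hγ).comp fun y : ℤ → ℝ≥0∞ => fun k => v k * y k
  refine Dominated.trans ⟨C, fun y => lqNorm_le_mul fun k _ => ?_⟩ hconv
  rw [← lqNorm_const_mul hp]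
  refine (lqNorm_le_mul fun j hj => ?_).trans (mul_le_mul_right (lqNorm_mono_set (subset_univ _)) _)
  calc v k * y j ≤ C * (γ ^ (j - k).natAbs * v j) * y j := by gcongr; exact h k j hj
    _ = C * (γ ^ (j - k).natAbs * (v j * y j)) := by ring

/-- Geometric growth of a two-sided sequence, up to a constant. -/
def GeomGrowing (v : ℤ → ℝ≥0∞) : Prop :=
  ∃ γ : ℝ≥0, γ < 1 ∧ ∃ C : ℝ≥0, ∀ j k, j ≤ k → v j ≤ C * (γ ^ (j - k).natAbs * v k)

/-- Geometric decay of a two-sided sequence, up to a constant. -/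
def GeomDecaying (v : ℤ → ℝ≥0∞) : Prop :=
  ∃ γ : ℝ≥0, γ < 1 ∧ ∃ C : ℝ≥0, ∀ j k, j ≤ k → v k ≤ C * (γ ^ (j - k).natAbs * v j)

theorem GeomGrowing.lqNorm_Iic_dominated (hv : GeomGrowing v) (hq : q ≠ 0) :
    (fun k => lqNorm q (Iic k) v) ≲ v := by
  obtain ⟨γ, hγ, C, h⟩ := hv
  exact lqNorm_dominated_of_geometric hq hγ (c := id) fun k j hj => h j k hj

theorem GeomGrowing.of_comparable {w : ℤ → ℝ≥0∞} (hv : GeomGrowing v) (hvw : v ∼ w) :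
    GeomGrowing w := by
  obtain ⟨γ, hγ, C, h⟩ := hv
  obtain ⟨⟨A, hA⟩, ⟨B, hB⟩⟩ := hvw
  refine ⟨γ, hγ, B * C * A, fun j k hjk => ?_⟩
  calc w j ≤ B * (C * (γ ^ (j - k).natAbs * (A * w k))) := by
        refine (hB j).trans (mul_le_mul_right ((h j k hjk).trans ?_) _)
        gcongr
        exact hA k
    _ = _ := by push_cast; ring

theorem GeomGrowing.hardy (hv : GeomGrowing v) (hp : p ≠ 0) (hq : q ≠ 0) :
    (fun y => lqNorm q univ fun k => v k * lqNorm p (Ici k) y) ≲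
      fun y => lqNorm q univ fun k => v k * y k := by
  obtain ⟨γ, hγ, C, h⟩ := hv
  refine lqNorm_hardy hp hq hγ (C := C) fun k j hj => ?_
  rw [← Int.natAbs_neg, neg_sub]
  exact h k j hj

theorem GeomDecaying.hardy (hv : GeomDecaying v) (hp : p ≠ 0) (hq : q ≠ 0) :
    (fun y => lqNorm q univ fun k => v k * lqNorm p (Iic k) y) ≲
      fun y => lqNorm q univ fun k => v k * y k := by
  obtain ⟨γ, hγ, C, h⟩ := hv
  exact lqNorm_hardy hp hq hγ fun k j hj => h j k hj

theorem GeomDecaying.exists_min_mul_le {X : ℤ → ℝ≥0∞} (hv : GeomDecaying v)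
    (hXv : GeomGrowing fun k => X k * v k) (hX₀ : ∀ k, X k ≠ 0) (hX : ∀ k, X k ≠ ∞) :
    ∃ γ : ℝ≥0, γ < 1 ∧ ∃ C : ℝ≥0, ∀ j k,
      min 1 (X j / X k) * v j ≤ C * (γ ^ (j - k).natAbs * v k) := by
  obtain ⟨γ, hγ, C, h⟩ := hv
  obtain ⟨δ, hδ, D, h'⟩ := hXv
  refine ⟨max γ δ, max_lt hγ hδ, max C D, fun j k => ?_⟩
  rcases le_total j k with hjk | hkj
  · calc min 1 (X j / X k) * v j ≤ X j / X k * v j := by gcongr; exact min_le_right _ _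
      _ = (X k)⁻¹ * (X j * v j) := by rw [div_eq_mul_inv]; ring
      _ ≤ (X k)⁻¹ * (D * (δ ^ (j - k).natAbs * (X k * v k))) := mul_le_mul_right (h' j k hjk) _
      _ = (X k)⁻¹ * X k * (D * (δ ^ (j - k).natAbs * v k)) := by ring
      _ = D * (δ ^ (j - k).natAbs * v k) := by rw [ENNReal.inv_mul_cancel (hX₀ k) (hX k), one_mul]
      _ ≤ _ := by gcongr <;> exact le_max_right _ _
  · calc min 1 (X j / X k) * v j ≤ 1 * v j := by gcongr; exact min_le_left _ _
      _ ≤ C * (γ ^ (j - k).natAbs * v k) := by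
        rw [one_mul, ← Int.natAbs_neg, neg_sub]
        exact h k j hkj
      _ ≤ _ := by gcongr <;> exact le_max_left _ _

end Geometric

section Limiting

theorem lqNorm_univ_le_add (q : ℝ≥0∞) (k : ℤ) (y : ℤ → ℝ≥0∞) :
    lqNorm q univ y ≤ LpAddConst q * (lqNorm q (Iic k) y + lqNorm q (Ici k) y) := by
  rw [lqNorm_eq_indicator (T := Iic k), lqNorm_eq_indicator (T := Ici k)]
  refine (lqNorm_mono fun j _ => ?_).trans (lqNorm_add_le q univ _ _)
  rcases le_total j k with hjk | hkj
  · rw [indicator_of_mem (mem_Iic.2 hjk)]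
    exact le_self_add
  · rw [indicator_of_mem (mem_Ici.2 hkj)]
    exact le_add_self

theorem GeomDecaying.lqNorm_mul_min_dominated {q : ℝ≥0∞} {X w : ℤ → ℝ≥0∞} (hq : q ≠ 0)
    (hw : GeomDecaying w) (hXw : GeomGrowing fun k => X k * w k) (hX₀ : ∀ k, X k ≠ 0)
    (hX : ∀ k, X k ≠ ∞) :
    (fun k => lqNorm q univ fun j => w j * min 1 (X j / X k)) ≲ w := by
  obtain ⟨γ, hγ, C, h⟩ := hw.exists_min_mul_le hXw hX₀ hX
  exact lqNorm_dominated_of_geometric hq hγ (c := id) fun k j _ => (mul_comm _ _).trans_le (h j k)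

/-- The norm of a sequence in the discrete counterpart of a limiting space: `normL_comparable`
identifies `normL` with this norm of the sampled `K`-functional. -/
def limitingNorm (p q : ℝ≥0∞) (β w y : ℤ → ℝ≥0∞) : ℝ≥0∞ :=
  lqNorm p univ fun m => β m * lqNorm q (Iic m) fun j => w j * y j

section limitingNorm

variable {p q : ℝ≥0∞} {β w X y z : ℤ → ℝ≥0∞}

theorem limitingNorm_le_mul {C : ℝ≥0} (h : ∀ j, y j ≤ C * z j) :
    limitingNorm p q β w y ≤ C * limitingNorm p q β w z := by
  refine lqNorm_le_mul fun m _ => ?_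
  rw [mul_left_comm]
  refine mul_le_mul_right (lqNorm_le_mul fun j _ => ?_) _
  rw [mul_left_comm]
  exact mul_le_mul_right (h j) _

theorem limitingNorm_mul_const (hp : p ≠ 0) (hq : q ≠ 0) (c : ℝ≥0∞) :
    limitingNorm p q β w (fun j => y j * c) = limitingNorm p q β w y * c := by
  simp only [limitingNorm, mul_comm _ c, mul_left_comm _ c, lqNorm_const_mul hq,
    lqNorm_const_mul hp]

theorem exists_limitingNorm_add_le (p q : ℝ≥0∞) :
    ∃ C : ℝ≥0, ∀ β w y z, limitingNorm p q β w (fun j => y j + z j) ≤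
      C * (limitingNorm p q β w y + limitingNorm p q β w z) := by
  lift LpAddConst p to ℝ≥0 using (LpAddConst_lt_top p).ne with Cp hCp
  lift LpAddConst q to ℝ≥0 using (LpAddConst_lt_top q).ne with Cq hCq
  refine ⟨Cq * Cp, fun β w y z => ?_⟩
  calc limitingNorm p q β w (fun j => y j + z j)
      ≤ Cq * lqNorm p univ fun m => (β m * lqNorm q (Iic m) fun j => w j * y j) +
          β m * lqNorm q (Iic m) fun j => w j * z j := by
        refine lqNorm_le_mul fun m _ => ?_
        rw [← mul_add, mul_left_comm, hCq]
        simp only [mul_add (w _)]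
        exact mul_le_mul_right (lqNorm_add_le q _ _ _) _
    _ ≤ Cq * (Cp * (limitingNorm p q β w y + limitingNorm p q β w z)) := by
        gcongr
        rw [hCp]
        exact lqNorm_add_le p univ _ _
    _ = _ := by rw [coe_mul, mul_assoc]

theorem mul_lqNorm_Ici_le_limitingNorm (hp : p ≠ 0) (hq : q ≠ 0) (j : ℤ) :
    w j * y j * lqNorm p (Ici j) β ≤ limitingNorm p q β w y := by
  rw [← lqNorm_const_mul hp]
  refine (lqNorm_mono fun m hm => ?_).trans (lqNorm_mono_set (subset_univ _))
  rw [mul_comm]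
  exact mul_le_mul_right (le_lqNorm (y := fun j => w j * y j) hq (mem_Iic.2 hm)) _

theorem limitingNorm_indicator_Ici_le (hp : p ≠ 0) (k : ℤ) :
    limitingNorm p q β w ((Ici k).indicator y) ≤
      lqNorm p (Ici k) β * lqNorm q (Ici k) fun j => w j * y j := by
  have hinner : ∀ m, (β m * lqNorm q (Iic m) fun j => w j * (Ici k).indicator y j) ≤
      (lqNorm q (Ici k) fun j => w j * y j) * (Ici k).indicator β m := by
    intro m
    rcases lt_or_ge m k with hmk | hkm
    · have hzero : ∀ j ∈ Iic m, w j * (Ici k).indicator y j ≤ (0 : ℝ≥0) * w j := fun j hj => by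
        rw [indicator_of_notMem (notMem_Ici.2 (lt_of_le_of_lt hj hmk)), mul_zero, coe_zero,
          zero_mul]
      have hle := lqNorm_le_mul (q := q) hzero
      rw [coe_zero, zero_mul] at hle
      simp [le_zero_iff.1 hle]
    · rw [indicator_of_mem (mem_Ici.2 hkm), mul_comm]
      simp only [← indicator_mul_right]
      gcongr
      rw [lqNorm_eq_indicator (T := Ici k)]
      exact lqNorm_mono_set (subset_univ _)
  refine (lqNorm_mono fun m _ => hinner m).trans_eq ?_
  rw [lqNorm_const_mul hp, ← lqNorm_eq_indicator, mul_comm]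

theorem GeomGrowing.exists_lqNorm_Iic_mul_min_le (hq : q ≠ 0)
    (hXw : GeomGrowing fun k => X k * w k) :
    ∃ C : ℝ≥0, ∀ m k, lqNorm q (Iic m) (fun j => w j * min 1 (X j / X k)) ≤
      C * ((X k)⁻¹ * (X m * w m)) := by
  obtain ⟨C, hC⟩ := hXw.lqNorm_Iic_dominated hq
  refine ⟨C, fun m k => ?_⟩
  calc lqNorm q (Iic m) (fun j => w j * min 1 (X j / X k))
      ≤ lqNorm q (Iic m) fun j => (X k)⁻¹ * (X j * w j) := lqNorm_mono fun j _ => by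
        calc w j * min 1 (X j / X k) ≤ w j * (X j / X k) := by gcongr; exact min_le_right _ _
          _ = _ := by rw [div_eq_mul_inv]; ring
    _ ≤ (X k)⁻¹ * (C * (X m * w m)) := by
        rw [lqNorm_const_mul hq]
        exact mul_le_mul_right (hC m) _
    _ = _ := mul_left_comm _ _ _

theorem limitingNorm_min_dominated (hp : p ≠ 0) (hq : q ≠ 0) (hw : GeomDecaying w)
    (hXw : GeomGrowing fun k => X k * w k) (hβ : GeomGrowing fun k => β k * (X k * w k))
    (hX₀ : ∀ k, X k ≠ 0) (hX : ∀ k, X k ≠ ∞) :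
    (fun k => limitingNorm p q β w fun j => min 1 (X j / X k)) ≲
      fun k => w k * lqNorm p (Ici k) β := by
  obtain ⟨B, hB⟩ := hw.lqNorm_mul_min_dominated hq hXw hX₀ hX
  obtain ⟨C, hC⟩ := hXw.exists_lqNorm_Iic_mul_min_le hq
  obtain ⟨D, hD⟩ := hβ.lqNorm_Iic_dominated hp
  lift LpAddConst p to ℝ≥0 using (LpAddConst_lt_top p).ne with Cp hCp
  refine ⟨Cp * (C * D + B), fun k => ?_⟩
  have hIic : (lqNorm p (Iic k) fun m =>
      β m * lqNorm q (Iic m) fun j => w j * min 1 (X j / X k)) ≤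
        C * D * (w k * lqNorm p (Ici k) β) := by
    calc _ ≤ C * lqNorm p (Iic k) fun m => (X k)⁻¹ * (β m * (X m * w m)) :=
          lqNorm_le_mul fun m _ => (mul_le_mul_right (hC m k) _).trans_eq (by ring)
      _ ≤ C * ((X k)⁻¹ * (D * (β k * (X k * w k)))) := by
          rw [lqNorm_const_mul hp]
          gcongr
          exact hD k
      _ = C * D * (w k * β k) * ((X k)⁻¹ * X k) := by ring
      _ ≤ _ := by
          rw [ENNReal.inv_mul_cancel (hX₀ k) (hX k), mul_one]
          gcongr
          exact le_lqNorm hp (mem_Ici.2 le_rfl)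
  have hIci : (lqNorm p (Ici k) fun m =>
      β m * lqNorm q (Iic m) fun j => w j * min 1 (X j / X k)) ≤
        B * (w k * lqNorm p (Ici k) β) := by
    calc _ ≤ lqNorm p (Ici k) fun m => B * w k * β m := lqNorm_mono fun m _ => by
          rw [mul_comm]
          gcongr
          exact (lqNorm_mono_set (subset_univ _)).trans (hB k)
      _ = _ := by rw [lqNorm_const_mul hp, mul_assoc]
  calc _ ≤ Cp * (C * D * (w k * lqNorm p (Ici k) β) + B * (w k * lqNorm p (Ici k) β)) := by
        rw [hCp]
        exact (lqNorm_univ_le_add p k _).trans (by gcongr)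
    _ = _ := by push_cast; ring

end limitingNorm

end Limiting
/-- The Haar measure `du / u` of the multiplicative group `(0, ∞)`, as a measure on `ℝ`. It is
encoded as the image of Lebesgue measure under `exp`, which makes its invariance obvious. -/
def mulHaar : Measure ℝ := (volume : Measure ℝ).map Real.exp

theorem measurableEmbedding_exp : MeasurableEmbedding Real.exp :=
  Real.isOpenEmbedding_exp.measurableEmbedding

theorem mulHaar_restrict_eq_withDensity {s : Set ℝ} (hs : MeasurableSet s) (hs₀ : s ⊆ Ioi 0) :
    mulHaar.restrict s = (volume.restrict s).withDensity fun u => ENNReal.ofReal u⁻¹ := by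
  ext t ht
  have hts : MeasurableSet (t ∩ s) := ht.inter hs
  have himage : Real.exp '' (Real.exp ⁻¹' (t ∩ s)) = t ∩ s := by
    rw [image_preimage_eq_inter_range, Real.range_exp]
    exact inter_eq_left.2 fun u hu => hs₀ hu.2
  have hdensity : ∀ v : ℝ, ENNReal.ofReal |Real.exp v| * ENNReal.ofReal (Real.exp v)⁻¹ = 1 := by
    intro v
    rw [abs_of_pos (Real.exp_pos v), ← ENNReal.ofReal_mul (Real.exp_pos v).le,
      mul_inv_cancel₀ (Real.exp_pos v).ne', ENNReal.ofReal_one]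
  rw [withDensity_apply _ ht, Measure.restrict_restrict ht, Measure.restrict_apply ht, mulHaar,
    Measure.map_apply Real.measurable_exp hts, ← himage,
    lintegral_image_eq_lintegral_abs_deriv_mul (Real.measurable_exp hts)
      (fun v _ => (Real.hasDerivAt_exp v).hasDerivWithinAt) Real.exp_injective.injOn, himage]
  simp only [hdensity, lintegral_const, Measure.restrict_apply_univ, one_mul]

theorem LqNorm_eq_eLpNorm_mulHaar {q : ℝ≥0∞} (hq : q ≠ 0) {s : Set ℝ} (hs : MeasurableSet s)
    (hs₀ : s ⊆ Ioi 0) {g G : ℝ → ℝ≥0∞}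
    (hg : ∀ u ∈ s, g u = ENNReal.ofReal (u ^ (-q⁻¹.toReal)) * G u) :
    LqNorm q s g = eLpNorm G q (mulHaar.restrict s) := by
  have hdensity : Measurable fun u : ℝ => ENNReal.ofReal u⁻¹ := by fun_prop
  rw [mulHaar_restrict_eq_withDensity hs hs₀, LqNorm]
  split_ifs with hq_top
  · subst hq_top
    have hpos : ∀ᵐ u ∂volume.restrict s, ENNReal.ofReal u⁻¹ ≠ 0 :=
      ae_restrict_of_forall_mem hs fun u hu => by simpa using hs₀ hu
    have hgG : g =ᵐ[volume.restrict s] G := ae_restrict_of_forall_mem hs fun u hu => by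
      simp [hg u hu]
    rw [essSup_congr_ae hgG, eLpNorm_exponent_top, eLpNormEssSup]
    exact le_antisymm
      (essSup_mono_measure (withDensity_absolutelyContinuous' hdensity.aemeasurable hpos))
      (essSup_mono_measure (withDensity_absolutelyContinuous _ _))
  · rw [eLpNorm_eq_lintegral_rpow_enorm_toReal hq hq_top,
      lintegral_withDensity_eq_lintegral_mul_non_measurable _ hdensity
        (.of_forall fun _ => ofReal_lt_top), one_div, ENNReal.toReal_inv]
    congr 1
    refine setLIntegral_congr_fun hs fun u hu => ?_
    have hq_pos : 0 < q.toReal := ENNReal.toReal_pos hq hq_top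
    simp only [Pi.mul_apply, enorm_eq_self]
    rw [hg u hu, ENNReal.mul_rpow_of_nonneg _ _ hq_pos.le,
      ENNReal.ofReal_rpow_of_nonneg (by have := hs₀ hu; simp at this; positivity) hq_pos.le,
      ← Real.rpow_mul (le_of_lt (hs₀ hu)), ENNReal.toReal_inv, neg_mul,
      inv_mul_cancel₀ hq_pos.ne', Real.rpow_neg_one]

theorem LqNorm_Ioi_eq_eLpNorm_mulHaar {q : ℝ≥0∞} (hq : q ≠ 0) {g G : ℝ → ℝ≥0∞}
    (hg : ∀ u, 0 < u → g u = ENNReal.ofReal (u ^ (-q⁻¹.toReal)) * G u) :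
    LqNorm q (Ioi 0) g = eLpNorm G q mulHaar := by
  have hmem : ∀ᵐ u ∂mulHaar, u ∈ Ioi (0 : ℝ) :=
    (ae_map_iff Real.measurable_exp.aemeasurable measurableSet_Ioi).2 (.of_forall Real.exp_pos)
  rw [LqNorm_eq_eLpNorm_mulHaar hq measurableSet_Ioi subset_rfl hg,
    Measure.restrict_eq_self_of_ae_mem hmem]

theorem map_mul_left_mulHaar {c : ℝ} (hc : 0 < c) : mulHaar.map (c * ·) = mulHaar := by
  have h : (c * ·) ∘ Real.exp = Real.exp ∘ (Real.log c + ·) := by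
    ext v
    simp [Real.exp_add, Real.exp_log hc]
  rw [mulHaar, Measure.map_map (measurable_const_mul c) Real.measurable_exp, h,
    ← Measure.map_map Real.measurable_exp (measurable_const_add _), map_add_left_eq_self]

theorem eLpNorm_comp_mul_left_Ioi (q : ℝ≥0∞) (G : ℝ → ℝ≥0∞) {c : ℝ} (hc : 0 < c) (t : ℝ) :
    eLpNorm (fun u => G (c * u)) q (mulHaar.restrict (Ioi t)) =
      eLpNorm G q (mulHaar.restrict (Ioi (c * t))) := by
  have hemb : MeasurableEmbedding (c * · : ℝ → ℝ) := measurableEmbedding_mulLeft₀ hc.ne'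
  have hpre : (c * ·) ⁻¹' Ioi (c * t) = Ioi t := by
    ext u
    exact mul_lt_mul_iff_right₀ hc
  conv_rhs => rw [← map_mul_left_mulHaar hc, hemb.restrict_map, hemb.eLpNorm_map_measure, hpre]
  rfl

/-- `b` is positive on `(0, ∞)` and of index `σ` in the sense of Potter's bounds: up to
multiplicative constants, `b t / b s` lies between the two powers `(t / s) ^ (σ ± ε)` for every
`ε > 0`. Index `0` is slow variation. The bounds are recorded after taking logarithms, where the
calculus of indices is additive. -/
structure HasPotterIndex (b : ℝ → ℝ) (σ : ℝ) : Prop where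
  pos : ∀ t, 0 < t → 0 < b t
  bound : ∀ ε, 0 < ε → ∃ C, ∀ s t, 0 < s → 0 < t →
    |Real.log (b t) - Real.log (b s) - σ * (Real.log t - Real.log s)| ≤
      ε * |Real.log t - Real.log s| + C

namespace HasPotterIndex

variable {b c : ℝ → ℝ} {σ τ : ℝ}

protected theorem congr (hb : HasPotterIndex b σ) (h : ∀ t, 0 < t → c t = b t) :
    HasPotterIndex c σ :=
  ⟨fun t ht => by rw [h t ht]; exact hb.pos t ht, fun ε hε => (hb.bound ε hε).imp
    fun _ hC s t hs ht => by rw [h s hs, h t ht]; exact hC s t hs ht⟩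

protected theorem id : HasPotterIndex (fun t => t) 1 :=
  ⟨fun _ ht => ht, fun ε hε => ⟨0, fun s t _ _ => by
    rw [one_mul, sub_self, abs_zero]
    positivity⟩⟩

protected theorem mul (hb : HasPotterIndex b σ) (hc : HasPotterIndex c τ) :
    HasPotterIndex (fun t => b t * c t) (σ + τ) := by
  refine ⟨fun t ht => mul_pos (hb.pos t ht) (hc.pos t ht), fun ε hε => ?_⟩
  obtain ⟨B, hB⟩ := hb.bound (ε / 2) (half_pos hε)
  obtain ⟨C, hC⟩ := hc.bound (ε / 2) (half_pos hε)
  refine ⟨B + C, fun s t hs ht => ?_⟩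
  rw [Real.log_mul (hb.pos t ht).ne' (hc.pos t ht).ne',
    Real.log_mul (hb.pos s hs).ne' (hc.pos s hs).ne']
  calc _ = |(Real.log (b t) - Real.log (b s) - σ * (Real.log t - Real.log s)) +
        (Real.log (c t) - Real.log (c s) - τ * (Real.log t - Real.log s))| := by congr 1; ring
    _ ≤ _ := (abs_add_le _ _).trans (add_le_add (hB s t hs ht) (hC s t hs ht))
    _ = _ := by ring

protected theorem rpow (hb : HasPotterIndex b σ) (p : ℝ) :
    HasPotterIndex (fun t => b t ^ p) (p * σ) := by
  refine ⟨fun t ht => Real.rpow_pos_of_pos (hb.pos t ht) p, fun ε hε => ?_⟩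
  obtain ⟨C, hC⟩ := hb.bound (ε / (|p| + 1)) (by positivity)
  refine ⟨|p| * C, fun s t hs ht => ?_⟩
  rw [Real.log_rpow (hb.pos t ht), Real.log_rpow (hb.pos s hs)]
  calc _ = |p| * |Real.log (b t) - Real.log (b s) - σ * (Real.log t - Real.log s)| := by
        rw [← abs_mul]; congr 1; ring
    _ ≤ |p| * (ε / (|p| + 1) * |Real.log t - Real.log s| + C) := by gcongr; exact hC s t hs ht
    _ = ε * (|p| / (|p| + 1)) * |Real.log t - Real.log s| + |p| * C := by ring
    _ ≤ ε * 1 * |Real.log t - Real.log s| + |p| * C := by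
        gcongr
        exact div_le_one_of_le₀ (by linarith) (by positivity)
    _ = _ := by rw [mul_one]

protected theorem div (hb : HasPotterIndex b σ) (hc : HasPotterIndex c τ) :
    HasPotterIndex (fun t => b t / c t) (σ - τ) := by
  simpa only [div_eq_mul_inv, Real.rpow_neg_one, neg_one_mul, sub_eq_add_neg] using
    hb.mul (hc.rpow (-1))

protected theorem comp (hb : HasPotterIndex b σ) (hc : HasPotterIndex c τ) :
    HasPotterIndex (fun t => b (c t)) (σ * τ) := by
  refine ⟨fun t ht => hb.pos _ (hc.pos t ht), fun ε hε => ?_⟩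
  obtain ⟨B, hB⟩ := hb.bound (ε / (2 * (|τ| + 1))) (by positivity)
  obtain ⟨C, hC⟩ := hc.bound (min 1 (ε / (2 * (|σ| + 1)))) (by positivity)
  refine ⟨B + (|σ| + ε / (2 * (|τ| + 1))) * C, fun s t hs ht => ?_⟩
  have hb' := hB _ _ (hc.pos s hs) (hc.pos t ht)
  have hc' := hC s t hs ht
  set l := Real.log t - Real.log s
  set m := Real.log (c t) - Real.log (c s)
  have hm : |m| ≤ (|τ| + 1) * |l| + C := by
    calc |m| = |τ * l + (m - τ * l)| := by congr 1; ring
      _ ≤ |τ| * |l| + (1 * |l| + C) := by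
        rw [← abs_mul]
        refine (abs_add_le _ _).trans (add_le_add le_rfl (hc'.trans ?_))
        gcongr
        exact min_le_left _ _
      _ = (|τ| + 1) * |l| + C := by ring
  have hσ : |σ| * |m - τ * l| ≤ ε / 2 * |l| + |σ| * C := by
    calc |σ| * |m - τ * l| ≤ |σ| * (ε / (2 * (|σ| + 1)) * |l| + C) := by
          gcongr
          refine hc'.trans ?_
          gcongr
          exact min_le_right _ _
      _ = ε / 2 * (|σ| / (|σ| + 1)) * |l| + |σ| * C := by field_simp
      _ ≤ ε / 2 * 1 * |l| + |σ| * C := by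
          gcongr
          exact div_le_one_of_le₀ (by linarith) (by positivity)
      _ = _ := by rw [mul_one]
  calc _ = |(Real.log (b (c t)) - Real.log (b (c s)) - σ * m) + σ * (m - τ * l)| := by
        congr 1; ring
    _ ≤ (ε / (2 * (|τ| + 1)) * |m| + B) + |σ| * |m - τ * l| := by
        rw [← abs_mul]
        exact (abs_add_le _ _).trans (add_le_add hb' le_rfl)
    _ ≤ (ε / (2 * (|τ| + 1)) * ((|τ| + 1) * |l| + C) + B) + (ε / 2 * |l| + |σ| * C) := by gcongr
    _ = _ := by field_simp; ring

theorem of_le_mul_exp (hpos : ∀ t, 0 < t → 0 < b t)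
    (h : ∀ ε, 0 < ε → ∃ C, ∀ s t, 0 < s → 0 < t → b t ≤
      C * Real.exp (σ * (Real.log t - Real.log s) + ε * |Real.log t - Real.log s|) * b s) :
    HasPotterIndex b σ := by
  refine ⟨hpos, fun ε hε => ?_⟩
  obtain ⟨C, hC⟩ := h ε hε
  have hC₀ : 0 < C := pos_of_mul_pos_left
    (pos_of_mul_pos_left ((hpos 1 one_pos).trans_le (hC 1 1 one_pos one_pos)) (hpos 1 one_pos).le)
    (Real.exp_pos _).le
  have hlog : ∀ s t, 0 < s → 0 < t → Real.log (b t) - Real.log (b s) -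
      σ * (Real.log t - Real.log s) ≤ ε * |Real.log t - Real.log s| + Real.log C := by
    intro s t hs ht
    have h := Real.log_le_log (hpos t ht) (hC s t hs ht)
    rw [Real.log_mul (by positivity) (hpos s hs).ne', Real.log_mul hC₀.ne' (Real.exp_pos _).ne',
      Real.log_exp] at h
    linarith
  refine ⟨Real.log C, fun s t hs ht => abs_le.2 ⟨?_, hlog s t hs ht⟩⟩
  have h := hlog t s ht hs
  rw [abs_sub_comm] at h
  linarith

theorem id_rpow_mul (hb : HasPotterIndex b 0) (σ : ℝ) :
    HasPotterIndex (fun t => t ^ σ * b t) σ := by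
  simpa only [mul_one, add_zero] using (HasPotterIndex.id.rpow σ).mul hb

theorem exists_le_mul_exp (hb : HasPotterIndex b σ) {ε : ℝ} (hε : 0 < ε) :
    ∃ C : ℝ≥0, ∀ s t, 0 < s → 0 < t → ENNReal.ofReal (b t) ≤
      C * ENNReal.ofReal (Real.exp (σ * (Real.log t - Real.log s) +
        ε * |Real.log t - Real.log s|)) * ENNReal.ofReal (b s) := by
  obtain ⟨C, hC⟩ := hb.bound ε hε
  refine ⟨(Real.exp C).toNNReal, fun s t hs ht => ?_⟩
  have hlog := (abs_le.1 (hC s t hs ht)).2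
  change _ ≤ ENNReal.ofReal (Real.exp C) * _ * _
  rw [← ENNReal.ofReal_mul (by positivity), ← ENNReal.ofReal_mul (by positivity),
    ← Real.exp_log (hb.pos s hs), ← Real.exp_add, ← Real.exp_add]
  refine ENNReal.ofReal_le_ofReal ?_
  rw [← Real.log_le_iff_le_exp (hb.pos t ht)]
  linarith

theorem exists_le_of_abs_log_sub_le (hb : HasPotterIndex b σ) (Λ : ℝ) :
    ∃ C : ℝ≥0, ∀ s t, 0 < s → 0 < t → |Real.log t - Real.log s| ≤ Λ →
      ENNReal.ofReal (b t) ≤ C * ENNReal.ofReal (b s) := by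
  obtain ⟨C, hC⟩ := hb.exists_le_mul_exp one_pos
  refine ⟨C * (Real.exp ((|σ| + 1) * Λ)).toNNReal, fun s t hs ht hst => (hC s t hs ht).trans ?_⟩
  rw [coe_mul]
  gcongr
  refine ENNReal.ofReal_le_ofReal (Real.exp_le_exp.2 ?_)
  calc _ ≤ |σ| * |Real.log t - Real.log s| + 1 * |Real.log t - Real.log s| :=
        add_le_add_left ((le_abs_self _).trans (abs_mul _ _).le) _
    _ = (|σ| + 1) * |Real.log t - Real.log s| := by ring
    _ ≤ (|σ| + 1) * Λ := by gcongr

end HasPotterIndex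

/-- A two-sided sequence of positive numbers whose logarithms are bi-Lipschitz in the index, such as
`exp (k * L)` with `L > 0`; the interval `(0, ∞)` is discretized along such sequences. -/
structure LogGrid (x : ℤ → ℝ) : Prop where
  pos : ∀ k, 0 < x k
  le_log_sub : ∃ δ, 0 < δ ∧ ∀ j k, j ≤ k → δ * (k - j) ≤ Real.log (x k) - Real.log (x j)
  log_sub_le : ∃ Δ, ∀ j k, j ≤ k → Real.log (x k) - Real.log (x j) ≤ Δ * (k - j)

namespace LogGrid

variable {x : ℤ → ℝ} {b : ℝ → ℝ} {σ : ℝ}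

theorem strictMono (hx : LogGrid x) : StrictMono x := by
  obtain ⟨δ, hδ, h⟩ := hx.le_log_sub
  refine fun j k hjk => (Real.log_lt_log_iff (hx.pos j) (hx.pos k)).1 (sub_pos.1 ?_)
  have hjk' : (0 : ℝ) < k - j := sub_pos.2 (Int.cast_lt.2 hjk)
  exact (mul_pos hδ hjk').trans_le (h j k hjk.le)

theorem exp_int_mul {L : ℝ} (hL : 0 < L) : LogGrid fun k : ℤ => Real.exp (k * L) := by
  have hlog : ∀ j k : ℤ, Real.log (Real.exp (k * L)) - Real.log (Real.exp (j * L)) = L * (k - j) :=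
    fun j k => by rw [Real.log_exp, Real.log_exp]; ring
  exact ⟨fun k => Real.exp_pos _, ⟨L, hL, fun j k _ => (hlog j k).ge⟩,
    ⟨L, fun j k _ => (hlog j k).le⟩⟩

theorem exists_comp_exp_int_mul (hb : HasPotterIndex b σ) (hσ : 0 < σ) :
    ∃ L > 0, LogGrid fun k : ℤ => b (Real.exp (k * L)) := by
  obtain ⟨C, hC⟩ := hb.bound (σ / 2) (half_pos hσ)
  have hC₀ : 0 ≤ C := by simpa using hC 1 1 one_pos one_pos
  let L := 2 * (C + 1) / σ
  have hL : 0 < L := by positivity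
  have hσL : σ * L = 2 * (C + 1) := mul_div_cancel₀ _ hσ.ne'
  have hlog : ∀ j k : ℤ, j < k → |Real.log (b (Real.exp (k * L))) -
      Real.log (b (Real.exp (j * L))) - 2 * (C + 1) * (k - j)| ≤ (2 * C + 1) * (k - j) := by
    intro j k hjk
    have hjk' : (1 : ℝ) ≤ k - j := by
      rw [← Int.cast_sub]
      exact_mod_cast Int.sub_pos.2 hjk
    have h := hC (Real.exp (j * L)) (Real.exp (k * L)) (Real.exp_pos _) (Real.exp_pos _)
    rw [Real.log_exp, Real.log_exp, ← sub_mul,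
      abs_of_nonneg (mul_nonneg (by linarith : (0 : ℝ) ≤ k - j) hL.le)] at h
    calc _ = |Real.log (b (Real.exp (k * L))) - Real.log (b (Real.exp (j * L))) -
          σ * ((k - j) * L)| := by rw [← hσL]; congr 1; ring
      _ ≤ σ / 2 * ((k - j) * L) + C := h
      _ = (C + 1) * (k - j) + C := by linear_combination (k - j : ℝ) / 2 * hσL
      _ ≤ _ := by nlinarith
  refine ⟨L, hL, fun k => hb.pos _ (Real.exp_pos _), ⟨1, one_pos, fun j k hjk => ?_⟩,
    ⟨4 * C + 3, fun j k hjk => ?_⟩⟩ <;> rcases hjk.eq_or_lt with rfl | hjk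
  · simp
  · linarith [(abs_le.1 (hlog j k hjk)).1]
  · simp
  · linarith [(abs_le.1 (hlog j k hjk)).2]

theorem exists_monotone_index (hx : LogGrid x) :
    ∃ κ : ℝ → ℤ, Monotone κ ∧ ∀ v, x (κ v) ≤ Real.exp v ∧ Real.exp v < x (κ v + 1) := by
  obtain ⟨δ, hδ, h⟩ := hx.le_log_sub
  have hexists : ∀ v, ∃ k, x k ≤ Real.exp v ∧ Real.exp v < x (k + 1) := by
    intro v
    have hle_iff : ∀ k, x k ≤ Real.exp v ↔ Real.log (x k) ≤ v := fun k =>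
      (Real.log_le_iff_le_exp (hx.pos k)).symm
    have hbdd : ∃ b : ℤ, ∀ k, x k ≤ Real.exp v → k ≤ b := by
      refine ⟨max 0 ⌈(v - Real.log (x 0)) / δ⌉, fun k hk => ?_⟩
      rcases le_total k 0 with hk₀ | hk₀
      · exact hk₀.trans (le_max_left _ _)
      · refine le_max_of_le_right (Int.cast_le.1 (le_trans ?_ (Int.le_ceil _)))
        rw [le_div_iff₀ hδ]
        have := h 0 k hk₀
        have := (hle_iff k).1 hk
        push_cast at *
        linarith
    have hne : ∃ k, x k ≤ Real.exp v := by
      refine ⟨min 0 ⌊(v - Real.log (x 0)) / δ⌋, (hle_iff _).2 ?_⟩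
      have h₀ := h _ 0 (min_le_left 0 ⌊(v - Real.log (x 0)) / δ⌋)
      have hfloor : (min 0 ⌊(v - Real.log (x 0)) / δ⌋ : ℤ) ≤ (v - Real.log (x 0)) / δ :=
        (Int.cast_le.2 (min_le_right _ _)).trans (Int.floor_le _)
      rw [le_div_iff₀ hδ] at hfloor
      push_cast at *
      linarith
    obtain ⟨k, hk, hmax⟩ := Int.exists_greatest_of_bdd hbdd hne
    exact ⟨k, hk, not_le.1 fun hk' => by have := hmax _ hk'; omega⟩
  choose κ hκ using hexists
  refine ⟨κ, fun v w hvw => Int.lt_add_one_iff.1 (hx.strictMono.lt_iff_lt.1 ?_), hκ⟩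
  exact (hκ v).1.trans_lt ((Real.exp_le_exp.2 hvw).trans_lt (hκ w).2)

theorem exists_le_geometric (hx : LogGrid x) (hb : HasPotterIndex b σ) (hσ : σ ≠ 0) :
    ∃ γ : ℝ≥0, γ < 1 ∧ ∃ C : ℝ≥0, ∀ j k : ℤ, 0 ≤ σ * (k - j) →
      ENNReal.ofReal (b (x j)) ≤ C * (γ ^ (j - k).natAbs * ENNReal.ofReal (b (x k))) := by
  obtain ⟨δ, hδ, h⟩ := hx.le_log_sub
  obtain ⟨C, hC⟩ := hb.exists_le_mul_exp (half_pos (abs_pos.2 hσ))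
  refine ⟨(Real.exp (-(|σ| / 2 * δ))).toNNReal, ?_, C, fun j k hjk => ?_⟩
  · rw [Real.toNNReal_lt_one, Real.exp_lt_one_iff]
    have := abs_pos.2 hσ
    exact neg_lt_zero.2 (by positivity)
  have hexp : σ * (Real.log (x j) - Real.log (x k)) + |σ| / 2 * |Real.log (x j) - Real.log (x k)|
      ≤ (j - k).natAbs * (-(|σ| / 2 * δ)) := by
    rw [Nat.cast_natAbs, Int.cast_abs, Int.cast_sub]
    rcases hσ.lt_or_gt with hσ | hσ
    · have hkj : k ≤ j := by
        rw [← Int.cast_le (R := ℝ)]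
        nlinarith
      have hlog := h k j hkj
      have hkj' : (0 : ℝ) ≤ j - k := sub_nonneg.2 (Int.cast_le.2 hkj)
      rw [abs_of_neg hσ, abs_of_nonneg hkj', abs_of_nonneg ((mul_nonneg hδ.le hkj').trans hlog)]
      nlinarith
    · have hjk : j ≤ k := by
        rw [← Int.cast_le (R := ℝ)]
        nlinarith
      have hlog := h j k hjk
      have hjk' : (0 : ℝ) ≤ k - j := sub_nonneg.2 (Int.cast_le.2 hjk)
      rw [abs_of_pos hσ, abs_sub_comm (j : ℝ), abs_of_nonneg hjk', abs_sub_comm (Real.log _),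
        abs_of_nonneg ((mul_nonneg hδ.le hjk').trans hlog)]
      nlinarith
  refine (hC _ _ (hx.pos k) (hx.pos j)).trans ?_
  rw [mul_assoc]
  gcongr
  change _ ≤ ENNReal.ofReal _ ^ _
  rw [← ENNReal.ofReal_pow (Real.exp_pos _).le, ← Real.exp_nat_mul]
  exact ENNReal.ofReal_le_ofReal (Real.exp_le_exp.2 hexp)

theorem geomGrowing (hx : LogGrid x) (hb : HasPotterIndex b σ) (hσ : 0 < σ) :
    GeomGrowing fun k => ENNReal.ofReal (b (x k)) := by
  obtain ⟨γ, hγ, C, h⟩ := hx.exists_le_geometric hb hσ.ne'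
  exact ⟨γ, hγ, C, fun j k hjk =>
    h j k (mul_nonneg hσ.le (sub_nonneg.2 (Int.cast_le.2 hjk)))⟩

theorem geomDecaying (hx : LogGrid x) (hb : HasPotterIndex b σ) (hσ : σ < 0) :
    GeomDecaying fun k => ENNReal.ofReal (b (x k)) := by
  obtain ⟨γ, hγ, C, h⟩ := hx.exists_le_geometric hb hσ.ne
  refine ⟨γ, hγ, C, fun j k hjk => ?_⟩
  rw [← Int.natAbs_neg, neg_sub]
  exact h k j (mul_nonneg_of_nonpos_of_nonpos hσ.le (sub_nonpos.2 (Int.cast_le.2 hjk)))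

theorem geomDecaying_rpow_mul (hx : LogGrid x) (hb : HasPotterIndex b 0) (hσ : 0 < σ) :
    GeomDecaying fun k => ENNReal.ofReal (x k ^ (-σ) * b (x k)) :=
  hx.geomDecaying (hb.id_rpow_mul (-σ)) (neg_neg_of_pos hσ)

theorem geomGrowing_mul_rpow_mul (hx : LogGrid x) (hb : HasPotterIndex b 0) (hσ : σ < 1) :
    GeomGrowing fun k => ENNReal.ofReal (x k) * ENNReal.ofReal (x k ^ (-σ) * b (x k)) := by
  have h := hx.geomGrowing (HasPotterIndex.id.mul (hb.id_rpow_mul (-σ))) (by linarith)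
  simpa only [ENNReal.ofReal_mul (hx.pos _).le] using h

end LogGrid

section Discretization

variable {ι : Type*} {x : ℤ → ℝ} {q : ℝ≥0∞} {y z : ι → ℤ → ℝ≥0∞} {G H : ι → ℝ → ℝ≥0∞}

theorem eLpNorm_dominated_of_singleton {μ ν : Measure ℤ}
    (h : (fun k : ℤ => μ {k}) ≲ fun k => ν {k}) (q : ℝ≥0∞) :
    (fun w : ℤ → ℝ≥0∞ => eLpNorm w q μ) ≲ fun w => eLpNorm w q ν := by
  obtain ⟨C, hC⟩ := h
  have hle : μ ≤ (C + 1) • ν := Measure.le_iff.2 fun s hs => by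
    rw [← μ.tsum_indicator_apply_singleton s hs,
      ← ((C + 1) • ν).tsum_indicator_apply_singleton s hs]
    refine ENNReal.tsum_le_tsum fun k => indicator_le_indicator ((hC k).trans ?_)
    rw [Measure.smul_apply, ENNReal.smul_def, smul_eq_mul]
    gcongr
    exact le_self_add
  refine ⟨(C + 1) ^ q.toReal⁻¹, fun w => (eLpNorm_mono_measure w hle).trans_eq ?_⟩
  rw [eLpNorm_smul_measure_of_ne_zero' (by positivity), ENNReal.smul_def, smul_eq_mul]

theorem LogGrid.eLpNorm_map_volume_comparable (hx : LogGrid x) {κ : ℝ → ℤ} (hκ : Measurable κ)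
    (hxκ : ∀ v, x (κ v) ≤ Real.exp v ∧ Real.exp v < x (κ v + 1)) (q : ℝ≥0∞) :
    (fun w : ℤ → ℝ≥0∞ => eLpNorm w q (volume.map κ)) ∼ fun w => lqNorm q univ w := by
  have hpre : ∀ k, κ ⁻¹' {k} = Ico (Real.log (x k)) (Real.log (x (k + 1))) := by
    intro k
    ext v
    rw [mem_preimage, mem_singleton_iff, mem_Ico, Real.log_le_iff_le_exp (hx.pos k),
      Real.lt_log_iff_exp_lt (hx.pos _)]
    refine ⟨fun h => h ▸ hxκ v, fun h => ?_⟩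
    have h₁ := hx.strictMono.lt_iff_lt.1 ((hxκ v).1.trans_lt h.2)
    have h₂ := hx.strictMono.lt_iff_lt.1 (h.1.trans_lt (hxκ v).2)
    omega
  have hmass : ∀ k, volume.map κ {k} = ENNReal.ofReal (Real.log (x (k + 1)) - Real.log (x k)) :=
    fun k => by rw [Measure.map_apply hκ .of_discrete, hpre, Real.volume_Ico]
  simp only [lqNorm, Measure.restrict_univ]
  constructor
  · obtain ⟨Δ, hΔ⟩ := hx.log_sub_le
    refine eLpNorm_dominated_of_singleton ⟨Δ.toNNReal, fun k => ?_⟩ q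
    simp only [hmass, Measure.count_singleton, mul_one]
    exact ENNReal.ofReal_le_ofReal (by simpa using hΔ k (k + 1) (by omega))
  · obtain ⟨δ, hδ, h⟩ := hx.le_log_sub
    refine eLpNorm_dominated_of_singleton ⟨δ⁻¹.toNNReal, fun k => ?_⟩ q
    simp only [hmass, Measure.count_singleton]
    rw [← ENNReal.ofReal, ← ENNReal.ofReal_mul (by positivity), ENNReal.one_le_ofReal,
      inv_mul_eq_div, one_le_div hδ]
    simpa using h k (k + 1) (by omega)

/-- Sampling of functions on `(0, ∞)` along a grid, uniformly over a family: `y i k` is comparable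
to every value of `G i` on the window `[x (k - 1), x (k + 1)]`. Neighbouring windows overlap, so `y`
varies by a bounded factor from one index to the next. -/
def Samples (x : ℤ → ℝ) (y : ι → ℤ → ℝ≥0∞) (G : ι → ℝ → ℝ≥0∞) : Prop :=
  ∃ C : ℝ≥0, ∀ i k, ∀ u ∈ Icc (x (k - 1)) (x (k + 1)), G i u ≤ C * y i k ∧ y i k ≤ C * G i u

namespace Samples

protected theorem mul (hG : Samples x y G) (hH : Samples x z H) :
    Samples x (fun i k => y i k * z i k) fun i u => G i u * H i u := by
  obtain ⟨C, hC⟩ := hG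
  obtain ⟨D, hD⟩ := hH
  refine ⟨C * D, fun i k u hu => ⟨?_, ?_⟩⟩
  · calc G i u * H i u ≤ C * y i k * (D * z i k) :=
          mul_le_mul' (hC i k u hu).1 (hD i k u hu).1
      _ = _ := by rw [coe_mul, mul_mul_mul_comm]
  · calc y i k * z i k ≤ C * G i u * (D * H i u) :=
          mul_le_mul' (hC i k u hu).2 (hD i k u hu).2
      _ = _ := by rw [coe_mul, mul_mul_mul_comm]

theorem exists_eLpNorm_le (hx : LogGrid x) (hG : Samples x y G) (q : ℝ≥0∞) :
    ∃ C : ℝ≥0, ∀ i, ∀ s : Set ℝ, MeasurableSet s → ∀ T : Set ℤ,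
      (∀ k, ∀ u ∈ Ico (x k) (x (k + 1)), u ∈ s → k ∈ T) →
      eLpNorm (G i) q (mulHaar.restrict s) ≤ C * lqNorm q T (y i) := by
  obtain ⟨κ, hκ, hxκ⟩ := hx.exists_monotone_index
  obtain ⟨D, hD⟩ := (hx.eLpNorm_map_volume_comparable hκ.measurable hxκ q).1
  obtain ⟨C, hC⟩ := hG
  refine ⟨C * D, fun i s hs T hsT => ?_⟩
  have hstep : ∀ v, s.indicator (G i) (Real.exp v) ≤ C * T.indicator (y i) (κ v) := by
    intro v
    by_cases hv : Real.exp v ∈ s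
    · rw [indicator_of_mem hv, indicator_of_mem (hsT _ _ (hxκ v) hv)]
      exact (hC i _ _ ⟨(hx.strictMono.monotone (by omega)).trans (hxκ v).1, (hxκ v).2.le⟩).1
    · rw [indicator_of_notMem hv]
      exact zero_le
  calc eLpNorm (G i) q (mulHaar.restrict s)
      = eLpNorm (fun v => s.indicator (G i) (Real.exp v)) q volume := by
        rw [← eLpNorm_indicator_eq_eLpNorm_restrict hs, mulHaar,
          measurableEmbedding_exp.eLpNorm_map_measure]
        rfl
    _ ≤ C * eLpNorm (fun v => T.indicator (y i) (κ v)) q volume :=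
        eLpNorm_le_nnreal_smul_eLpNorm_of_ae_le_mul' (.of_forall hstep) q
    _ = C * eLpNorm (T.indicator (y i)) q (volume.map κ) := by
        rw [eLpNorm_map_measure .of_discrete hκ.measurable.aemeasurable]
        rfl
    _ ≤ C * (D * lqNorm q univ (T.indicator (y i))) := by gcongr; exact hD _
    _ = ↑(C * D) * lqNorm q T (y i) := by rw [coe_mul, mul_assoc, ← lqNorm_eq_indicator]

theorem exists_lqNorm_le (hx : LogGrid x) (hG : Samples x y G) (q : ℝ≥0∞) :
    ∃ C : ℝ≥0, ∀ i, ∀ s : Set ℝ, MeasurableSet s → ∀ T : Set ℤ,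
      (∀ k ∈ T, Ico (x k) (x (k + 1)) ⊆ s) →
      lqNorm q T (y i) ≤ C * eLpNorm (G i) q (mulHaar.restrict s) := by
  obtain ⟨κ, hκ, hxκ⟩ := hx.exists_monotone_index
  obtain ⟨D, hD⟩ := (hx.eLpNorm_map_volume_comparable hκ.measurable hxκ q).2
  obtain ⟨C, hC⟩ := hG
  refine ⟨D * C, fun i s hs T hTs => ?_⟩
  have hstep : ∀ v, T.indicator (y i) (κ v) ≤ C * s.indicator (G i) (Real.exp v) := by
    intro v
    by_cases hv : κ v ∈ T
    · rw [indicator_of_mem hv, indicator_of_mem (hTs _ hv (hxκ v))]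
      exact (hC i _ _ ⟨(hx.strictMono.monotone (by omega)).trans (hxκ v).1, (hxκ v).2.le⟩).2
    · rw [indicator_of_notMem hv]
      exact zero_le
  calc lqNorm q T (y i) ≤ D * eLpNorm (T.indicator (y i)) q (volume.map κ) := by
        rw [lqNorm_eq_indicator]
        exact hD _
    _ = D * eLpNorm (fun v => T.indicator (y i) (κ v)) q volume := by
        rw [eLpNorm_map_measure .of_discrete hκ.measurable.aemeasurable]
        rfl
    _ ≤ D * (C * eLpNorm (fun v => s.indicator (G i) (Real.exp v)) q volume) := by
        gcongr
        exact eLpNorm_le_nnreal_smul_eLpNorm_of_ae_le_mul' (.of_forall hstep) q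
    _ = ↑(D * C) * eLpNorm (G i) q (mulHaar.restrict s) := by
        rw [← eLpNorm_indicator_eq_eLpNorm_restrict hs, mulHaar,
          measurableEmbedding_exp.eLpNorm_map_measure, coe_mul, mul_assoc]
        rfl

theorem exists_le_add_two (hx : LogGrid x) (hG : Samples x y G) :
    ∃ C : ℝ≥0, ∀ i k, y i (k + 2) ≤ C * y i k ∧ y i k ≤ C * y i (k + 2) := by
  obtain ⟨C, hC⟩ := hG
  refine ⟨C * C, fun i k => ?_⟩
  have h₀ := hC i k (x (k + 1)) ⟨hx.strictMono.monotone (by omega), le_rfl⟩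
  have h₂ := hC i (k + 2) (x (k + 1))
    ⟨hx.strictMono.monotone (by omega), hx.strictMono.monotone (by omega)⟩
  rw [coe_mul, mul_assoc, mul_assoc]
  exact ⟨h₂.2.trans (mul_le_mul_right h₀.1 _), h₀.2.trans (mul_le_mul_right h₂.1 _)⟩

theorem exists_lqNorm_add_two_le (hx : LogGrid x) (hG : Samples x y G) (q : ℝ≥0∞) :
    ∃ C : ℝ≥0, ∀ i, ∀ T : Set ℤ, lqNorm q ((· + 2) ⁻¹' T) (y i) ≤ C * lqNorm q T (y i) ∧
      lqNorm q T (y i) ≤ C * lqNorm q ((· + 2) ⁻¹' T) (y i) := by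
  obtain ⟨C, hC⟩ := hG.exists_le_add_two hx
  refine ⟨C, fun i T => ?_⟩
  rw [← lqNorm_comp_equiv (T := T) (Equiv.addRight 2)]
  exact ⟨lqNorm_le_mul fun k _ => (hC i k).2, lqNorm_le_mul fun k _ => (hC i k).1⟩

protected theorem eLpNorm (hx : LogGrid x) (hG : Samples x y G) (q : ℝ≥0∞) :
    (fun i => eLpNorm (G i) q mulHaar) ∼ fun i => lqNorm q univ (y i) := by
  obtain ⟨C, hC⟩ := hG.exists_eLpNorm_le hx q
  obtain ⟨D, hD⟩ := hG.exists_lqNorm_le hx q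
  refine ⟨⟨C, fun i => ?_⟩, ⟨D, fun i => ?_⟩⟩
  · simpa using hC i univ .univ univ fun _ _ _ _ => mem_univ _
  · simpa using hD i univ .univ univ fun _ _ => subset_univ _

theorem eLpNorm_Ioo (hx : LogGrid x) (hG : Samples x y G) (q : ℝ≥0∞) :
    Samples x (fun i k => lqNorm q (Iic k) (y i))
      fun i t => eLpNorm (G i) q (mulHaar.restrict (Ioo 0 t)) := by
  obtain ⟨C, hC⟩ := hG.exists_eLpNorm_le hx q
  obtain ⟨D, hD⟩ := hG.exists_lqNorm_le hx q
  obtain ⟨B, hB⟩ := hG.exists_lqNorm_add_two_le hx q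
  refine ⟨max C (B * D), fun i k u hu => ⟨?_, ?_⟩⟩
  · refine (hC i _ measurableSet_Ioo (Iic k) fun j v hv hvu => ?_).trans
      (by gcongr; exact le_max_left _ _)
    have := hx.strictMono.lt_iff_lt.1 (hv.1.trans_lt (hvu.2.trans_le hu.2))
    exact Int.lt_add_one_iff.1 this
  · calc lqNorm q (Iic k) (y i) ≤ B * lqNorm q ((· + 2) ⁻¹' Iic k) (y i) := (hB i _).2
      _ ≤ B * (D * eLpNorm (G i) q (mulHaar.restrict (Ioo 0 u))) := by
        gcongr
        refine hD i _ measurableSet_Ioo _ fun j hj v hv => ⟨(hx.pos j).trans_le hv.1, ?_⟩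
        rw [mem_preimage, mem_Iic] at hj
        exact hv.2.trans_le ((hx.strictMono.monotone (by omega)).trans hu.1)
      _ ≤ _ := by
        rw [← mul_assoc, ← coe_mul]
        gcongr
        exact le_max_right _ _

theorem eLpNorm_Ioi (hx : LogGrid x) (hG : Samples x y G) (q : ℝ≥0∞) :
    Samples x (fun i k => lqNorm q (Ici k) (y i))
      fun i t => eLpNorm (G i) q (mulHaar.restrict (Ioi t)) := by
  obtain ⟨C, hC⟩ := hG.exists_eLpNorm_le hx q
  obtain ⟨D, hD⟩ := hG.exists_lqNorm_le hx q
  obtain ⟨B, hB⟩ := hG.exists_lqNorm_add_two_le hx q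
  refine ⟨max (C * B) (B * D), fun i k u hu => ⟨?_, ?_⟩⟩
  · calc _ ≤ C * lqNorm q ((· + 2) ⁻¹' Ici k) (y i) := by
          refine hC i _ measurableSet_Ioi _ fun j v hv hvu => ?_
          have := hx.strictMono.lt_iff_lt.1 (hu.1.trans_lt (hvu.out.trans hv.2))
          rw [mem_preimage, mem_Ici]
          omega
      _ ≤ C * (B * lqNorm q (Ici k) (y i)) := by gcongr; exact (hB i _).1
      _ ≤ _ := by
        rw [← mul_assoc, ← coe_mul]
        gcongr
        exact le_max_left _ _
  · calc lqNorm q (Ici k) (y i) = lqNorm q ((· + 2) ⁻¹' Ici (k + 2)) (y i) := by simp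
      _ ≤ B * lqNorm q (Ici (k + 2)) (y i) := (hB i _).1
      _ ≤ B * (D * eLpNorm (G i) q (mulHaar.restrict (Ioi u))) := by
        gcongr
        refine hD i _ measurableSet_Ioi _ fun j hj v hv => ?_
        rw [mem_Ici] at hj
        exact hu.2.trans_lt ((hx.strictMono (by omega)).trans_le hv.1)
      _ ≤ _ := by
        rw [← mul_assoc, ← coe_mul]
        gcongr
        exact le_max_right _ _

theorem of_log_bound (hx : LogGrid x) (hG : ∀ Λ, ∃ C : ℝ≥0, ∀ i s t, 0 < s → 0 < t →
    |Real.log t - Real.log s| ≤ Λ → G i t ≤ C * G i s) :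
    Samples x (fun i k => G i (x k)) G := by
  obtain ⟨Δ, hΔ⟩ := hx.log_sub_le
  obtain ⟨C, hC⟩ := hG Δ
  refine ⟨C, fun i k u hu => ?_⟩
  have hu₀ : 0 < u := (hx.pos _).trans_le hu.1
  have hdist : |Real.log u - Real.log (x k)| ≤ Δ := by
    have hprev := hΔ (k - 1) k (by omega)
    have hnext := hΔ k (k + 1) (by omega)
    have hlow := Real.log_le_log (hx.pos _) hu.1
    have hupp := Real.log_le_log hu₀ hu.2
    push_cast at hprev hnext
    exact abs_le.2 ⟨by linarith, by linarith⟩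
  exact ⟨hC i _ _ (hx.pos k) hu₀ hdist, hC i _ _ hu₀ (hx.pos k) (by rwa [abs_sub_comm])⟩

theorem of_hasPotterIndex (hx : LogGrid x) {b : ℝ → ℝ} {σ : ℝ} (hb : HasPotterIndex b σ) :
    Samples x (fun (_ : ι) k => ENNReal.ofReal (b (x k))) fun _ u => ENNReal.ofReal (b u) :=
  of_log_bound hx fun Λ => (hb.exists_le_of_abs_log_sub_le Λ).imp fun _ hC _ => hC

end Samples

end Discretization

section Kf

variable {F : Type*} [AddCommGroup F]

theorem Kf_le (N₀ N₁ : F → ℝ≥0∞) (t : ℝ) (f g : F) :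
    Kf N₀ N₁ t f ≤ N₀ g + ENNReal.ofReal t * N₁ (f - g) :=
  iInf_le _ g

theorem Kf_le_mul (N₀ N₁ : F → ℝ≥0∞) {c s t : ℝ} (hc : 1 ≤ c) (hst : t ≤ c * s) (f : F) :
    Kf N₀ N₁ t f ≤ ENNReal.ofReal c * Kf N₀ N₁ s f := by
  have hc₀ : 0 < c := by positivity
  rw [Kf, Kf, ENNReal.mul_iInf fun h => absurd h ofReal_ne_top]
  refine iInf_mono fun g => ?_
  rw [mul_add, ← mul_assoc, ← ENNReal.ofReal_mul hc₀.le]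
  gcongr
  exact le_mul_of_one_le_left' (ENNReal.one_le_ofReal.2 hc)

theorem Kf_dominated_Kf {N₀ N₁ N₀' N₁' : F → ℝ≥0∞} (h₀ : N₀ ≲ N₀') (h₁ : N₁ ≲ N₁') :
    (fun i : F × ℝ => Kf N₀ N₁ i.2 i.1) ≲ fun i => Kf N₀' N₁' i.2 i.1 := by
  obtain ⟨C, hC⟩ := h₀
  obtain ⟨D, hD⟩ := h₁
  refine ⟨max C D, fun ⟨f, t⟩ => ?_⟩
  dsimp only
  rw [Kf.eq_def N₀', ENNReal.mul_iInf fun h => absurd h coe_ne_top]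
  refine le_iInf fun g => (Kf_le N₀ N₁ t f g).trans ?_
  rw [mul_add, mul_left_comm]
  gcongr
  · exact (hC g).trans (by gcongr; exact le_max_left _ _)
  · exact (hD _).trans (by gcongr; exact le_max_right _ _)

theorem Dominated.lqNorm_mul_Kf {N₀ N₁ N₀' N₁' : F → ℝ≥0∞} (h₀ : N₀ ≲ N₀') (h₁ : N₁ ≲ N₁')
    (q : ℝ≥0∞) (v : ℤ → ℝ≥0∞) (t : ℤ → ℝ) :
    (fun f => lqNorm q univ fun k => v k * Kf N₀ N₁ (t k) f) ≲
      fun f => lqNorm q univ fun k => v k * Kf N₀' N₁' (t k) f := by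
  obtain ⟨C, hC⟩ := Kf_dominated_Kf h₀ h₁
  refine ⟨C, fun f => lqNorm_le_mul fun k _ => ?_⟩
  rw [mul_left_comm]
  exact mul_le_mul_right (hC (f, t k)) _

theorem Comparable.lqNorm_mul_Kf {N₀ N₁ N₀' N₁' : F → ℝ≥0∞} (h₀ : N₀ ∼ N₀') (h₁ : N₁ ∼ N₁')
    (q : ℝ≥0∞) (v : ℤ → ℝ≥0∞) (t : ℤ → ℝ) :
    (fun f => lqNorm q univ fun k => v k * Kf N₀ N₁ (t k) f) ∼
      fun f => lqNorm q univ fun k => v k * Kf N₀' N₁' (t k) f :=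
  ⟨h₀.1.lqNorm_mul_Kf h₁.1 q v t, h₀.2.lqNorm_mul_Kf h₁.2 q v t⟩

protected theorem Samples.Kf {x : ℤ → ℝ} (hx : LogGrid x) (N₀ N₁ : F → ℝ≥0∞) :
    Samples x (fun f k => Kf N₀ N₁ (x k) f) fun f u => Kf N₀ N₁ u f := by
  refine of_log_bound hx fun Λ => ⟨(Real.exp (max Λ 0)).toNNReal, fun f s t hs ht hst => ?_⟩
  refine Kf_le_mul N₀ N₁ (Real.one_le_exp (le_max_right _ _)) ?_ f
  rw [← Real.log_le_log_iff ht (by positivity), Real.log_mul (Real.exp_pos _).ne' hs.ne',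
    Real.log_exp]
  linarith [(abs_le.1 hst).2, le_max_left Λ 0]

variable {x : ℤ → ℝ} {q r : ℝ≥0∞} {a b : ℝ → ℝ}

theorem ofReal_rpow_sub_mul {u : ℝ} (hu : 0 < u) (σ p c : ℝ) :
    ENNReal.ofReal (u ^ (-σ - p) * c) =
      ENNReal.ofReal (u ^ (-p)) * ENNReal.ofReal (u ^ (-σ) * c) := by
  rw [sub_eq_neg_add, Real.rpow_add hu, mul_assoc, ENNReal.ofReal_mul (by positivity)]

theorem normK_comparable (hx : LogGrid x) (N₀ N₁ : F → ℝ≥0∞) (θ : ℝ) (hq : q ≠ 0)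
    (hb : HasPotterIndex b 0) :
    normK N₀ N₁ θ q b ∼ fun f => lqNorm q univ fun k =>
      ENNReal.ofReal (x k ^ (-θ) * b (x k)) * Kf N₀ N₁ (x k) f := by
  have hnorm : normK N₀ N₁ θ q b = fun f =>
      eLpNorm (fun u => ENNReal.ofReal (u ^ (-θ) * b u) * Kf N₀ N₁ u f) q mulHaar := by
    ext f
    refine LqNorm_Ioi_eq_eLpNorm_mulHaar hq fun u hu => ?_
    rw [ofReal_rpow_sub_mul hu, mul_assoc]
  rw [hnorm]
  exact ((Samples.of_hasPotterIndex hx (hb.id_rpow_mul (-θ))).mul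
    (Samples.Kf hx N₀ N₁)).eLpNorm hx q

theorem normL_comparable (hx : LogGrid x) (N₀ N₁ : F → ℝ≥0∞) (σ : ℝ) (hr : r ≠ 0) (hq : q ≠ 0)
    (hb : HasPotterIndex b 0) (ha : HasPotterIndex a 0) :
    normL N₀ N₁ σ r q b a ∼ fun f =>
      limitingNorm r q (fun k => ENNReal.ofReal (b (x k) / a (x k)))
        (fun k => ENNReal.ofReal (x k ^ (-σ) * a (x k))) fun k => Kf N₀ N₁ (x k) f := by
  have hnorm : normL N₀ N₁ σ r q b a = fun f => eLpNorm (fun t => ENNReal.ofReal (b t / a t) *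
      eLpNorm (fun u => ENNReal.ofReal (u ^ (-σ) * a u) * Kf N₀ N₁ u f) q
        (mulHaar.restrict (Ioo 0 t))) r mulHaar := by
    ext f
    refine LqNorm_Ioi_eq_eLpNorm_mulHaar hr fun t ht => ?_
    rw [ENNReal.ofReal_mul (by positivity), mul_assoc]
    congr 2
    refine LqNorm_eq_eLpNorm_mulHaar hq measurableSet_Ioo (fun u hu => hu.1) fun u hu => ?_
    rw [ofReal_rpow_sub_mul hu.1, mul_assoc]
  rw [hnorm]
  exact ((Samples.of_hasPotterIndex hx (hb.div ha)).mul
    (((Samples.of_hasPotterIndex hx (ha.id_rpow_mul (-σ))).mul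
      (Samples.Kf hx N₀ N₁)).eLpNorm_Ioo hx q)).eLpNorm hx r

end Kf

section Tail

variable {ι : Type*} {β : ℝ → ℝ} {r : ℝ≥0∞} {x : ℤ → ℝ}

/-- The quasi-norm over `(t, ∞)` of a weight with respect to `du / u`, that is, the tail
`LqNorm r (Ioi t) (svWgt r β)` entering `c₁`. -/
def tailNorm (r : ℝ≥0∞) (β : ℝ → ℝ) (t : ℝ) : ℝ≥0∞ :=
  eLpNorm (fun u => ENNReal.ofReal (β u)) r (mulHaar.restrict (Ioi t))

theorem LqNorm_Ioi_svWgt (hr : r ≠ 0) (β : ℝ → ℝ) {t : ℝ} (ht : 0 < t) :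
    LqNorm r (Ioi t) (svWgt r β) = tailNorm r β t :=
  LqNorm_eq_eLpNorm_mulHaar hr measurableSet_Ioi (fun _ hu => ht.trans hu) fun u hu => by
    have hu₀ : 0 < u := ht.trans hu
    rw [svWgt, ENNReal.ofReal_mul (by positivity)]

theorem HasPotterIndex.tailNorm_le_mul_exp (hβ : HasPotterIndex β 0) (r : ℝ≥0∞) {ε : ℝ}
    (hε : 0 < ε) : ∃ C : ℝ≥0, ∀ s t, 0 < s → 0 < t → tailNorm r β t ≤
      C * ENNReal.ofReal (Real.exp (ε * |Real.log t - Real.log s|)) * tailNorm r β s := by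
  obtain ⟨C, hC⟩ := hβ.exists_le_mul_exp hε
  refine ⟨C, fun s t hs ht => ?_⟩
  have hscale := eLpNorm_comp_mul_left_Ioi r (fun u => ENNReal.ofReal (β u)) (div_pos ht hs) s
  rw [div_mul_cancel₀ t hs.ne'] at hscale
  rw [tailNorm, ← hscale, ENNReal.ofReal, ← coe_mul]
  refine eLpNorm_le_nnreal_smul_eLpNorm_of_ae_le_mul'
    (ae_restrict_of_forall_mem measurableSet_Ioi fun u hu => ?_) r
  have hu₀ : 0 < u := hs.trans hu
  have h := hC u (t / s * u) hu₀ (by positivity)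
  rwa [Real.log_mul (div_pos ht hs).ne' hu₀.ne', add_sub_cancel_right,
    Real.log_div ht.ne' hs.ne', zero_mul, zero_add] at h

theorem Samples.tailNorm (hx : LogGrid x) (hβ : HasPotterIndex β 0) (r : ℝ≥0∞) :
    Samples x (fun (_ : ι) k => lqNorm r (Ici k) fun j => ENNReal.ofReal (β (x j)))
      fun _ t => tailNorm r β t :=
  (Samples.of_hasPotterIndex hx hβ).eLpNorm_Ioi hx r

theorem HasPotterIndex.tailNorm_ne_zero (hβ : HasPotterIndex β 0) (hr : r ≠ 0) {t : ℝ}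
    (ht : 0 < t) : tailNorm r β t ≠ 0 := by
  have hgrid : LogGrid fun k : ℤ => Real.exp (k * 1) := LogGrid.exp_int_mul one_pos
  obtain ⟨C, hC⟩ := Samples.tailNorm (ι := Unit) hgrid hβ r
  obtain ⟨D, hD⟩ := hβ.tailNorm_le_mul_exp r one_pos
  intro hzero
  have hone : tailNorm r β 1 = 0 := by simpa [hzero] using hD t 1 ht one_pos
  have h := (hC () 0 1 (by constructor <;> norm_num)).2
  simp only [hone, mul_zero] at h
  have hle := (le_lqNorm (y := fun j : ℤ => ENNReal.ofReal (β (Real.exp (j * 1)))) hr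
    (mem_Ici.2 (le_refl 0))).trans h
  exact (ENNReal.ofReal_pos.2 (hβ.pos _ (Real.exp_pos _))).not_ge hle

theorem HasPotterIndex.tailNorm_ne_top (hβ : HasPotterIndex β 0) (hfin : tailNorm r β 1 ≠ ∞) {t : ℝ}
    (ht : 0 < t) : tailNorm r β t ≠ ∞ := by
  obtain ⟨C, hC⟩ := hβ.tailNorm_le_mul_exp r one_pos
  exact ne_top_of_le_ne_top (mul_ne_top (mul_ne_top coe_ne_top ofReal_ne_top) hfin)
    (hC 1 t one_pos ht)

theorem HasPotterIndex.toReal_tailNorm (hβ : HasPotterIndex β 0) (hr : r ≠ 0)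
    (hfin : tailNorm r β 1 ≠ ∞) : HasPotterIndex (fun t => (tailNorm r β t).toReal) 0 := by
  refine .of_le_mul_exp (fun t ht => toReal_pos (hβ.tailNorm_ne_zero hr ht)
    (hβ.tailNorm_ne_top hfin ht)) fun ε hε => ?_
  obtain ⟨C, hC⟩ := hβ.tailNorm_le_mul_exp r hε
  refine ⟨C, fun s t hs ht => ?_⟩
  have h := toReal_mono (mul_ne_top (mul_ne_top coe_ne_top ofReal_ne_top)
    (hβ.tailNorm_ne_top hfin hs)) (hC s t hs ht)
  rwa [toReal_mul, toReal_mul, coe_toReal, toReal_ofReal (Real.exp_pos _).le, ← zero_add (ε * _),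
    ← zero_mul (Real.log t - Real.log s)] at h

theorem LogGrid.lqNorm_Ici_comparable (hx : LogGrid x) (hβ : HasPotterIndex β 0)
    (hfin : tailNorm r β 1 ≠ ∞) :
    (fun k => lqNorm r (Ici k) fun j => ENNReal.ofReal (β (x j))) ∼
      fun k => ENNReal.ofReal (tailNorm r β (x k)).toReal := by
  obtain ⟨C, hC⟩ := Samples.tailNorm (ι := Unit) hx hβ r
  have hmem : ∀ k, x k ∈ Icc (x (k - 1)) (x (k + 1)) := fun k =>
    ⟨hx.strictMono.monotone (by omega), hx.strictMono.monotone (by omega)⟩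
  have htail : ∀ k, ENNReal.ofReal (tailNorm r β (x k)).toReal = tailNorm r β (x k) := fun k =>
    ofReal_toReal (hβ.tailNorm_ne_top hfin (hx.pos k))
  simp only [htail]
  exact ⟨⟨C, fun k => (hC () k _ (hmem k)).2⟩, ⟨C, fun k => (hC () k _ (hmem k)).1⟩⟩

end Tail

theorem EquivOn.exists_le_mul {s : Set ℝ} {f g : ℝ → ℝ} (h : EquivOn s f g) :
    ∃ C, 0 ≤ C ∧ ∀ u ∈ s, ∀ v ∈ s, g u ≤ g v → f u ≤ C * f v := by
  obtain ⟨C, hC, hfg⟩ := h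
  refine ⟨C * C, by positivity, fun u hu v hv huv => ?_⟩
  calc f u ≤ C * g v := (hfg u hu).2.trans (by gcongr)
    _ ≤ C * (C * f v) := by gcongr; exact (inv_mul_le_iff₀ hC).1 (hfg v hv).1
    _ = C * C * f v := by ring

theorem SlowlyVarying.hasPotterIndex {b : ℝ → ℝ} (hb : SlowlyVarying b) : HasPotterIndex b 0 := by
  obtain ⟨-, hpos, hequiv⟩ := hb
  refine .of_le_mul_exp hpos fun ε hε => ?_
  obtain ⟨⟨g, hg, hbg⟩, ⟨h, hh, hbh⟩⟩ := hequiv ε hε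
  obtain ⟨C, hC₀, hC⟩ := hbg.exists_le_mul
  obtain ⟨D, -, hD⟩ := hbh.exists_le_mul
  refine ⟨max C D, fun s t hs ht => ?_⟩
  have hbs := hpos s hs
  have hmax : 0 ≤ max C D := hC₀.trans (le_max_left _ _)
  have hexp : ∀ p : ℝ, t ^ (-p) * s ^ p = Real.exp (p * (Real.log s - Real.log t)) := fun p => by
    rw [Real.rpow_def_of_pos hs, Real.rpow_def_of_pos ht, ← Real.exp_add]
    congr 1
    ring
  have hpow : ∀ p B : ℝ, B ≤ max C D →
      p * (Real.log s - Real.log t) ≤ ε * |Real.log t - Real.log s| →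
      t ^ p * b t ≤ B * (s ^ p * b s) →
      b t ≤ max C D *
        Real.exp (0 * (Real.log t - Real.log s) + ε * |Real.log t - Real.log s|) * b s := by
    intro p B hB hp hst
    calc b t = t ^ (-p) * (t ^ p * b t) := by
          rw [← mul_assoc, ← Real.rpow_add ht, neg_add_cancel, Real.rpow_zero, one_mul]
      _ ≤ t ^ (-p) * (B * (s ^ p * b s)) := by gcongr
      _ = B * Real.exp (p * (Real.log s - Real.log t)) * b s := by rw [← hexp]; ring
      _ ≤ _ := by rw [zero_mul, zero_add]; gcongr
  rcases le_total s t with hst | hts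
  · refine hpow (-ε) D (le_max_right _ _) ?_ (hD t ht s hs (hh hs ht hst))
    rw [neg_mul, ← mul_neg, neg_sub]
    gcongr
    exact le_abs_self _
  · refine hpow ε C (le_max_left _ _) ?_ (hC t ht s hs (hg ht hs hts))
    rw [abs_sub_comm]
    gcongr
    exact le_abs_self _

section QuasiSeminorm

variable {F : Type*} [AddCommGroup F] {M₀ M₁ : F → ℝ≥0∞}

/-- An extended quasi-seminorm on an abelian group: the common structure of the quasi-norms of a
couple, with the value `∞` marking elements outside the space. -/
structure IsQuasiSeminorm (M : F → ℝ≥0∞) : Prop where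
  zero : M 0 = 0
  neg : ∀ f, M (-f) = M f
  add : ∃ C : ℝ≥0, ∀ f g, M (f + g) ≤ C * (M f + M g)

theorem QuasiBanach.isQuasiSeminorm (A : QuasiBanach E) : IsQuasiSeminorm A.N := by
  obtain ⟨C, -, hC, h⟩ := A.quasi
  refine ⟨A.zero, fun f => ?_, C.toNNReal, fun f g => ?_⟩
  · rw [← neg_one_smul ℝ f, A.smul]
    simp
  · rw [coe_toNNReal hC]
    exact h f g

theorem Kf_neg (h₀ : IsQuasiSeminorm M₀) (h₁ : IsQuasiSeminorm M₁) (t : ℝ) (f : F) :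
    Kf M₀ M₁ t (-f) = Kf M₀ M₁ t f := by
  refine (Equiv.neg F).iInf_congr fun g => ?_
  rw [Equiv.neg_apply, h₀.neg, sub_neg_eq_add, ← h₁.neg, neg_add']

theorem exists_Kf_sub_le (h₀ : IsQuasiSeminorm M₀) (h₁ : IsQuasiSeminorm M₁) :
    ∃ C : ℝ≥0, ∀ t f g, Kf M₀ M₁ t (f - g) ≤ C * (Kf M₀ M₁ t f + Kf M₀ M₁ t g) := by
  obtain ⟨C₀, hC₀⟩ := h₀.add
  obtain ⟨C₁, hC₁⟩ := h₁.add
  refine ⟨max C₀ C₁, fun t f g => ?_⟩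
  rw [← Kf_neg h₀ h₁ t g]
  have hne : ((max C₀ C₁ : ℝ≥0) : ℝ≥0∞) ≠ ∞ := coe_ne_top
  simp only [Kf, ENNReal.iInf_add, ENNReal.add_iInf,
    ENNReal.mul_iInf fun h => absurd h hne]
  refine le_iInf₂ fun g₂ g₁ => (Kf_le M₀ M₁ t (f - g) (g₁ + g₂)).trans ?_
  have hfg : f - g - (g₁ + g₂) = (f - g₁) + (-g - g₂) := by abel
  calc M₀ (g₁ + g₂) + ENNReal.ofReal t * M₁ (f - g - (g₁ + g₂))
      ≤ C₀ * (M₀ g₁ + M₀ g₂) + ENNReal.ofReal t * (C₁ * (M₁ (f - g₁) + M₁ (-g - g₂))) := by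
        rw [hfg]
        gcongr
        exacts [hC₀ _ _, hC₁ _ _]
    _ ≤ max C₀ C₁ * (M₀ g₁ + M₀ g₂) +
          ENNReal.ofReal t * (max C₀ C₁ * (M₁ (f - g₁) + M₁ (-g - g₂))) := by
        gcongr <;> simp
    _ = _ := by push_cast; ring

theorem Kf_sub_le_min_mul (h₀ : IsQuasiSeminorm M₀) {s t : ℝ} (ht : 0 < t) (hst : s ≤ t) (f g : F) :
    Kf M₀ M₁ s (f - g) ≤
      min 1 (ENNReal.ofReal s / ENNReal.ofReal t) * (M₀ g + ENNReal.ofReal t * M₁ (f - g)) := by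
  have hle : ENNReal.ofReal s / ENNReal.ofReal t ≤ 1 :=
    ENNReal.div_le_of_le_mul (by simpa using ENNReal.ofReal_le_ofReal hst)
  calc Kf M₀ M₁ s (f - g) ≤ ENNReal.ofReal s * M₁ (f - g) := by
        simpa [h₀.zero] using Kf_le M₀ M₁ s (f - g) 0
    _ = ENNReal.ofReal s / ENNReal.ofReal t * (ENNReal.ofReal t * M₁ (f - g)) := by
        rw [← mul_assoc, ENNReal.div_mul_cancel (ENNReal.ofReal_pos.2 ht).ne' ofReal_ne_top]
    _ ≤ _ := by rw [min_eq_right hle]; gcongr; exact le_add_self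

theorem Kf_le_min_mul (h₁ : IsQuasiSeminorm M₁) {s t : ℝ} (ht : 0 < t) (hts : t ≤ s) (f g : F) :
    Kf M₀ M₁ s g ≤
      min 1 (ENNReal.ofReal s / ENNReal.ofReal t) * (M₀ g + ENNReal.ofReal t * M₁ (f - g)) := by
  have hle : 1 ≤ ENNReal.ofReal s / ENNReal.ofReal t := by
    rw [ENNReal.le_div_iff_mul_le (.inl (ENNReal.ofReal_pos.2 ht).ne') (.inl ofReal_ne_top),
      one_mul]
    exact ENNReal.ofReal_le_ofReal hts
  calc Kf M₀ M₁ s g ≤ M₀ g := by simpa [h₁.zero] using Kf_le M₀ M₁ s g g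
    _ ≤ _ := by rw [min_eq_left hle, one_mul]; exact le_self_add

theorem exists_Kf_split_le (h₀ : IsQuasiSeminorm M₀) (h₁ : IsQuasiSeminorm M₁) :
    ∃ C : ℝ≥0, ∀ (f g : F) (s t : ℝ), 0 < t →
      Kf M₀ M₁ s g ≤ C * ((Iic t).indicator (fun s => Kf M₀ M₁ s f) s +
        min 1 (ENNReal.ofReal s / ENNReal.ofReal t) *
          (M₀ g + ENNReal.ofReal t * M₁ (f - g))) ∧
      Kf M₀ M₁ s (f - g) ≤ C * ((Ici t).indicator (fun s => Kf M₀ M₁ s f) s +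
        min 1 (ENNReal.ofReal s / ENNReal.ofReal t) *
          (M₀ g + ENNReal.ofReal t * M₁ (f - g))) := by
  obtain ⟨C, hC⟩ := exists_Kf_sub_le h₀ h₁
  refine ⟨max 1 C, fun f g s t ht => ?_⟩
  have hone : ∀ y z : ℝ≥0∞, y ≤ ↑(max 1 C) * (z + y) := fun y z => by
    simpa using mul_le_mul' (coe_le_coe.2 (le_max_left 1 C)) (le_add_self : y ≤ z + y)
  have hmax : ∀ y : ℝ≥0∞, C * y ≤ ↑(max 1 C) * y := fun y => by gcongr; exact le_max_right _ _
  constructor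
  · rcases le_total s t with hst | hts
    · rw [indicator_of_mem (mem_Iic.2 hst)]
      rw [show Kf M₀ M₁ s g = Kf M₀ M₁ s (f - (f - g)) by rw [_root_.sub_sub_cancel]]
      refine (hC s f (f - g)).trans ((hmax _).trans ?_)
      gcongr
      exact Kf_sub_le_min_mul h₀ ht hst f g
    · exact (Kf_le_min_mul h₁ ht hts f g).trans (hone _ _)
  · rcases le_total s t with hst | hts
    · exact (Kf_sub_le_min_mul h₀ ht hst f g).trans (hone _ _)
    · rw [indicator_of_mem (mem_Ici.2 hts)]
      refine (hC s f g).trans ((hmax _).trans ?_)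
      gcongr
      exact Kf_le_min_mul h₁ ht hts f g

end QuasiSeminorm

section Holmstedt

variable {F : Type*} [AddCommGroup F] {M₀ M₁ : F → ℝ≥0∞} {x : ℤ → ℝ} {p q₀ q₁ r : ℝ≥0∞}
  {W₀ W₁ β v : ℤ → ℝ≥0∞} {ρ : ℤ → ℝ}

theorem exists_lqNorm_Kf_split_le (h₀ : IsQuasiSeminorm M₀) (h₁ : IsQuasiSeminorm M₁)
    (hx : LogGrid x) (hq₀ : q₀ ≠ 0) (hW₀ : GeomDecaying W₀)
    (hXW₀ : GeomGrowing fun k => ENNReal.ofReal (x k) * W₀ k) :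
    ∃ C : ℝ≥0, ∀ f g k, (lqNorm q₀ univ fun j => W₀ j * Kf M₀ M₁ (x j) g) ≤
      C * ((lqNorm q₀ (Iic k) fun j => W₀ j * Kf M₀ M₁ (x j) f) +
        W₀ k * (M₀ g + ENNReal.ofReal (x k) * M₁ (f - g))) := by
  obtain ⟨A, hA⟩ := exists_Kf_split_le h₀ h₁
  obtain ⟨B, hB⟩ := hW₀.lqNorm_mul_min_dominated hq₀ hXW₀
    (fun k => (ENNReal.ofReal_pos.2 (hx.pos k)).ne') fun k => ofReal_ne_top
  lift LpAddConst q₀ to ℝ≥0 using (LpAddConst_lt_top q₀).ne with Cq hCq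
  refine ⟨A * Cq * (1 + B), fun f g k => ?_⟩
  set e := M₀ g + ENNReal.ofReal (x k) * M₁ (f - g)
  calc (lqNorm q₀ univ fun j => W₀ j * Kf M₀ M₁ (x j) g)
      ≤ A * lqNorm q₀ univ fun j => (Iic k).indicator (fun j => W₀ j * Kf M₀ M₁ (x j) f) j +
          e * (W₀ j * min 1 (ENNReal.ofReal (x j) / ENNReal.ofReal (x k))) := by
        refine lqNorm_le_mul fun j _ => ?_
        refine (mul_le_mul_right (hA f g (x j) (x k) (hx.pos k)).1 _).trans_eq ?_
        have hind : (Iic (x k)).indicator (fun s => Kf M₀ M₁ s f) (x j) =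
            (Iic k).indicator (fun j => Kf M₀ M₁ (x j) f) j := by
          simp only [indicator, mem_Iic, hx.strictMono.le_iff_le]
        rw [hind, indicator_mul_right]
        ring
    _ ≤ A * (Cq * ((lqNorm q₀ (Iic k) fun j => W₀ j * Kf M₀ M₁ (x j) f) + e * (B * W₀ k))) := by
        rw [lqNorm_eq_indicator (T := Iic k), hCq]
        refine mul_le_mul_right ((lqNorm_add_le q₀ univ _ _).trans ?_) _
        rw [lqNorm_const_mul hq₀]
        gcongr
        exact hB k
    _ ≤ A * (Cq * ((lqNorm q₀ (Iic k) fun j => W₀ j * Kf M₀ M₁ (x j) f) + e * (B * W₀ k))) +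
          A * (Cq * (B * (lqNorm q₀ (Iic k) fun j => W₀ j * Kf M₀ M₁ (x j) f) + W₀ k * e)) :=
        le_self_add
    _ = _ := by push_cast; ring

theorem exists_limitingNorm_Kf_split_le (h₀ : IsQuasiSeminorm M₀) (h₁ : IsQuasiSeminorm M₁)
    (hx : LogGrid x) (hp : p ≠ 0) (hq₁ : q₁ ≠ 0) (hW₁ : GeomDecaying W₁)
    (hXW₁ : GeomGrowing fun k => ENNReal.ofReal (x k) * W₁ k)
    (hβ : GeomGrowing fun k => β k * (ENNReal.ofReal (x k) * W₁ k)) :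
    ∃ C : ℝ≥0, ∀ f g k, (limitingNorm p q₁ β W₁ fun j => Kf M₀ M₁ (x j) (f - g)) ≤
      C * (lqNorm p (Ici k) β * ((lqNorm q₁ (Ici k) fun j => W₁ j * Kf M₀ M₁ (x j) f) +
        W₁ k * (M₀ g + ENNReal.ofReal (x k) * M₁ (f - g)))) := by
  obtain ⟨A, hA⟩ := exists_Kf_split_le h₀ h₁
  obtain ⟨B, hB⟩ := limitingNorm_min_dominated hp hq₁ hW₁ hXW₁ hβ
    (fun k => (ENNReal.ofReal_pos.2 (hx.pos k)).ne') fun k => ofReal_ne_top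
  obtain ⟨Cq, hCq⟩ := exists_limitingNorm_add_le p q₁
  refine ⟨A * Cq * (1 + B), fun f g k => ?_⟩
  set e := M₀ g + ENNReal.ofReal (x k) * M₁ (f - g) with he
  calc (limitingNorm p q₁ β W₁ fun j => Kf M₀ M₁ (x j) (f - g))
      ≤ A * limitingNorm p q₁ β W₁ fun j => (Ici k).indicator (fun j => Kf M₀ M₁ (x j) f) j +
          min 1 (ENNReal.ofReal (x j) / ENNReal.ofReal (x k)) * e := by
        refine limitingNorm_le_mul fun j => (hA f g (x j) (x k) (hx.pos k)).2.trans_eq ?_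
        simp only [indicator, mem_Ici, hx.strictMono.le_iff_le, he]
    _ ≤ A * (Cq * (lqNorm p (Ici k) β * (lqNorm q₁ (Ici k) fun j => W₁ j * Kf M₀ M₁ (x j) f) +
          B * (W₁ k * lqNorm p (Ici k) β) * e)) := by
        refine mul_le_mul_right ((hCq _ _ _ _).trans ?_) _
        rw [limitingNorm_mul_const hp hq₁]
        gcongr
        exacts [limitingNorm_indicator_Ici_le hp k, hB k]
    _ ≤ A * (Cq * (lqNorm p (Ici k) β * (lqNorm q₁ (Ici k) fun j => W₁ j * Kf M₀ M₁ (x j) f) +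
          B * (W₁ k * lqNorm p (Ici k) β) * e)) +
        A * (Cq * lqNorm p (Ici k) β * (B * (lqNorm q₁ (Ici k) fun j => W₁ j * Kf M₀ M₁ (x j) f) +
          W₁ k * e)) := le_self_add
    _ = _ := by push_cast; ring

theorem Kf_dominated_lqNorm_add_mul_Kf (h₀ : IsQuasiSeminorm M₀) (h₁ : IsQuasiSeminorm M₁)
    (hx : LogGrid x) (hp : p ≠ 0) (hq₀ : q₀ ≠ 0) (hq₁ : q₁ ≠ 0)
    (hW₀ : GeomDecaying W₀) (hW₀_top : ∀ k, W₀ k ≠ ∞)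
    (hXW₀ : GeomGrowing fun k => ENNReal.ofReal (x k) * W₀ k)
    (hW₁ : GeomDecaying W₁) (hXW₁ : GeomGrowing fun k => ENNReal.ofReal (x k) * W₁ k)
    (hβ : GeomGrowing fun k => β k * (ENNReal.ofReal (x k) * W₁ k))
    (hW : (fun k => ENNReal.ofReal (ρ k) * lqNorm p (Ici k) β * W₁ k) ≲ W₀) :
    (fun i : F × ℤ => Kf (fun f => lqNorm q₀ univ fun j => W₀ j * Kf M₀ M₁ (x j) f)
        (fun f => limitingNorm p q₁ β W₁ fun j => Kf M₀ M₁ (x j) f) (ρ i.2) i.1) ≲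
      fun i => (lqNorm q₀ (Iic i.2) fun j => W₀ j * Kf M₀ M₁ (x j) i.1) +
        (ENNReal.ofReal (ρ i.2) * lqNorm p (Ici i.2) β *
          lqNorm q₁ (Ici i.2) fun j => W₁ j * Kf M₀ M₁ (x j) i.1) +
        W₀ i.2 * Kf M₀ M₁ (x i.2) i.1 := by
  obtain ⟨A, hA⟩ := exists_lqNorm_Kf_split_le h₀ h₁ hx hq₀ hW₀ hXW₀
  obtain ⟨B, hB⟩ := exists_limitingNorm_Kf_split_le h₀ h₁ hx hp hq₁ hW₁ hXW₁ hβ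
  obtain ⟨C, hC⟩ := hW
  refine ⟨A + B + B * C, fun ⟨f, k⟩ => ?_⟩
  dsimp only
  set I := lqNorm q₀ (Iic k) fun j => W₀ j * Kf M₀ M₁ (x j) f
  set J := lqNorm q₁ (Ici k) fun j => W₁ j * Kf M₀ M₁ (x j) f
  set R := ENNReal.ofReal (ρ k) * lqNorm p (Ici k) β with hR
  have hRW : R * W₁ k ≤ C * W₀ k := hC k
  rw [Kf.eq_def M₀, ENNReal.mul_iInf fun h => absurd h (hW₀_top k), ENNReal.add_iInf,
    ENNReal.mul_iInf fun h => absurd h coe_ne_top]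
  refine le_iInf fun g => ?_
  set e := M₀ g + ENNReal.ofReal (x k) * M₁ (f - g)
  calc _ ≤ _ := Kf_le _ _ _ f g
    _ ≤ A * (I + W₀ k * e) +
        ENNReal.ofReal (ρ k) * (B * (lqNorm p (Ici k) β * (J + W₁ k * e))) := by
      gcongr
      exacts [hA f g k, hB f g k]
    _ = A * (I + W₀ k * e) + B * (R * J) + B * (R * W₁ k) * e := by rw [hR]; ring
    _ ≤ A * (I + W₀ k * e) + B * (R * J) + B * (C * W₀ k) * e := by gcongr
    _ ≤ A * (I + W₀ k * e) + B * (R * J) + B * (C * W₀ k) * e +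
        ((B + B * C) * I + (A + B * C) * (R * J) + B * (W₀ k * e)) := le_self_add
    _ = _ := by push_cast; ring

theorem exists_lqNorm_Iic_le_mul_limitingNorm (hp : p ≠ 0) (hq₀ : q₀ ≠ 0) (hq₁ : q₁ ≠ 0)
    (hR : GeomGrowing fun k => ENNReal.ofReal (ρ k))
    (hW : W₀ ≲ fun k => ENNReal.ofReal (ρ k) * lqNorm p (Ici k) β * W₁ k) :
    ∃ C : ℝ≥0, ∀ (y : ℤ → ℝ≥0∞) k, (lqNorm q₀ (Iic k) fun j => W₀ j * y j) ≤
      C * (ENNReal.ofReal (ρ k) * limitingNorm p q₁ β W₁ y) := by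
  obtain ⟨B, hB⟩ := hR.lqNorm_Iic_dominated hq₀
  obtain ⟨C, hC⟩ := hW
  refine ⟨C * B, fun y k => ?_⟩
  set N := limitingNorm p q₁ β W₁ y
  have hterm : ∀ j, W₀ j * y j ≤ C * (N * ENNReal.ofReal (ρ j)) := fun j => by
    calc W₀ j * y j ≤ C * (ENNReal.ofReal (ρ j) * lqNorm p (Ici j) β * W₁ j) * y j := by
          gcongr
          exact hC j
      _ = C * ((W₁ j * y j * lqNorm p (Ici j) β) * ENNReal.ofReal (ρ j)) := by ring
      _ ≤ _ := by
          gcongr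
          exact mul_lqNorm_Ici_le_limitingNorm hp hq₁ j
  calc _ ≤ C * lqNorm q₀ (Iic k) fun j => N * ENNReal.ofReal (ρ j) :=
        lqNorm_le_mul fun j _ => hterm j
    _ ≤ C * (N * (B * ENNReal.ofReal (ρ k))) := by
        rw [lqNorm_const_mul hq₀]
        gcongr
        exact hB k
    _ = _ := by push_cast; ring

theorem lqNorm_Iic_dominated_Kf (h₀ : IsQuasiSeminorm M₀) (h₁ : IsQuasiSeminorm M₁)
    (hp : p ≠ 0) (hq₀ : q₀ ≠ 0) (hq₁ : q₁ ≠ 0) (hR : GeomGrowing fun k => ENNReal.ofReal (ρ k))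
    (hW : W₀ ≲ fun k => ENNReal.ofReal (ρ k) * lqNorm p (Ici k) β * W₁ k) :
    (fun i : F × ℤ => lqNorm q₀ (Iic i.2) fun j => W₀ j * Kf M₀ M₁ (x j) i.1) ≲
      fun i => Kf (fun f => lqNorm q₀ univ fun j => W₀ j * Kf M₀ M₁ (x j) f)
        (fun f => limitingNorm p q₁ β W₁ fun j => Kf M₀ M₁ (x j) f) (ρ i.2) i.1 := by
  obtain ⟨A, hA⟩ := exists_Kf_sub_le h₀ h₁
  obtain ⟨B, hB⟩ := exists_lqNorm_Iic_le_mul_limitingNorm hp hq₀ hq₁ hR hW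
  lift LpAddConst q₀ to ℝ≥0 using (LpAddConst_lt_top q₀).ne with Cq hCq
  refine ⟨A * Cq * (1 + B), fun ⟨f, k⟩ => ?_⟩
  dsimp only
  rw [Kf.eq_def _ _ (ρ k), ENNReal.mul_iInf fun h => absurd h coe_ne_top]
  refine le_iInf fun g => ?_
  have hfg : ∀ j, Kf M₀ M₁ (x j) f ≤ A * (Kf M₀ M₁ (x j) g + Kf M₀ M₁ (x j) (f - g)) := fun j => by
    have h := hA (x j) g (g - f)
    rwa [_root_.sub_sub_cancel, ← neg_sub f g, Kf_neg h₀ h₁] at h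
  set N := lqNorm q₀ univ fun j => W₀ j * Kf M₀ M₁ (x j) g
  set L := ENNReal.ofReal (ρ k) * limitingNorm p q₁ β W₁ fun j => Kf M₀ M₁ (x j) (f - g)
  calc (lqNorm q₀ (Iic k) fun j => W₀ j * Kf M₀ M₁ (x j) f)
      ≤ A * lqNorm q₀ (Iic k) fun j =>
          W₀ j * Kf M₀ M₁ (x j) g + W₀ j * Kf M₀ M₁ (x j) (f - g) := lqNorm_le_mul fun j _ => by
        rw [← mul_add, mul_left_comm]
        exact mul_le_mul_right (hfg j) _
    _ ≤ A * (Cq * (N + B * L)) := by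
        rw [hCq]
        refine mul_le_mul_right ((lqNorm_add_le q₀ _ _ _).trans ?_) _
        gcongr
        exacts [lqNorm_mono_set (subset_univ _), hB _ k]
    _ ≤ A * (Cq * (N + B * L)) + A * (Cq * (B * N + L)) := le_self_add
    _ = _ := by push_cast; ring

theorem lqNorm_mul_tail_dominated {R : ℤ → ℝ≥0∞} (hr : r ≠ 0) (hq₁ : q₁ ≠ 0)
    (hv : GeomGrowing fun k => v k * R k) (hW : (fun k => R k * W₁ k) ≲ W₀) :
    (fun y : ℤ → ℝ≥0∞ => lqNorm r univ fun k => v k *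
      (R k * lqNorm q₁ (Ici k) fun j => W₁ j * y j)) ≲
      fun y => lqNorm r univ fun k => v k * (W₀ k * y k) := by
  obtain ⟨B, hB⟩ := hv.hardy hq₁ hr
  obtain ⟨C, hC⟩ := hW
  refine ⟨B * C, fun y => ?_⟩
  calc _ ≤ _ := (lqNorm_mono fun k _ => (mul_assoc _ _ _).ge).trans (hB fun j => W₁ j * y j)
    _ ≤ B * (C * lqNorm r univ fun k => v k * (W₀ k * y k)) := by
        refine mul_le_mul_right (lqNorm_le_mul fun k _ => ?_) _
        calc v k * R k * (W₁ k * y k) = v k * (R k * W₁ k * y k) := by ring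
          _ ≤ v k * (C * W₀ k * y k) := mul_le_mul_right (mul_le_mul_left (hC k) _) _
          _ = C * (v k * (W₀ k * y k)) := by ring
    _ = _ := by rw [coe_mul, mul_assoc]

theorem lqNorm_mul_Kf_comparable (h₀ : IsQuasiSeminorm M₀) (h₁ : IsQuasiSeminorm M₁)
    (hx : LogGrid x) (hr : r ≠ 0) (hp : p ≠ 0) (hq₀ : q₀ ≠ 0) (hq₁ : q₁ ≠ 0)
    (hW₀ : GeomDecaying W₀) (hW₀_top : ∀ k, W₀ k ≠ ∞)
    (hXW₀ : GeomGrowing fun k => ENNReal.ofReal (x k) * W₀ k)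
    (hW₁ : GeomDecaying W₁) (hXW₁ : GeomGrowing fun k => ENNReal.ofReal (x k) * W₁ k)
    (hβ : GeomGrowing fun k => β k * (ENNReal.ofReal (x k) * W₁ k))
    (hρ : GeomGrowing fun k => ENNReal.ofReal (ρ k))
    (hv : GeomGrowing fun k => v k * (ENNReal.ofReal (ρ k) * lqNorm p (Ici k) β))
    (hW : (fun k => ENNReal.ofReal (ρ k) * lqNorm p (Ici k) β * W₁ k) ∼ W₀) :
    (fun f => lqNorm r univ fun k => v k *
      Kf (fun f => lqNorm q₀ univ fun j => W₀ j * Kf M₀ M₁ (x j) f)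
        (fun f => limitingNorm p q₁ β W₁ fun j => Kf M₀ M₁ (x j) f) (ρ k) f) ∼
      fun f => lqNorm r univ fun k => v k *
        lqNorm q₀ (Iic k) fun j => W₀ j * Kf M₀ M₁ (x j) f := by
  set K : F → ℤ → ℝ≥0∞ := fun f k =>
    Kf (fun f => lqNorm q₀ univ fun j => W₀ j * Kf M₀ M₁ (x j) f)
      (fun f => limitingNorm p q₁ β W₁ fun j => Kf M₀ M₁ (x j) f) (ρ k) f
  set I : F → ℤ → ℝ≥0∞ := fun f k => lqNorm q₀ (Iic k) fun j => W₀ j * Kf M₀ M₁ (x j) f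
  set J : F → ℤ → ℝ≥0∞ := fun f k => lqNorm q₁ (Ici k) fun j => W₁ j * Kf M₀ M₁ (x j) f
  set R : ℤ → ℝ≥0∞ := fun k => ENNReal.ofReal (ρ k) * lqNorm p (Ici k) β
  have hupper := Dominated.lqNorm_mul (X := K) (Y := fun f k => I f k + R k * J f k + W₀ k *
    Kf M₀ M₁ (x k) f) (Kf_dominated_lqNorm_add_mul_Kf h₀ h₁ hx hp hq₀ hq₁ hW₀ hW₀_top hXW₀ hW₁ hXW₁
      hβ hW.1) r v
  refine ⟨?_, Dominated.lqNorm_mul (X := I) (Y := K)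
    (lqNorm_Iic_dominated_Kf h₀ h₁ hp hq₀ hq₁ hρ hW.2) r v⟩
  have hlocal : (fun f => lqNorm r univ fun k => v k * (W₀ k * Kf M₀ M₁ (x k) f)) ≲
      fun f => lqNorm r univ fun k => v k * I f k :=
    .of_le fun f => lqNorm_mono fun k _ => mul_le_mul_right
      (le_lqNorm (y := fun j => W₀ j * Kf M₀ M₁ (x j) f) hq₀ (mem_Iic.2 le_rfl)) _
  have htail := (lqNorm_mul_tail_dominated hr hq₁ hv hW.1).comp fun (f : F) j => Kf M₀ M₁ (x j) f
  exact hupper.trans ((Dominated.lqNorm_mul_add .rfl (htail.trans hlocal)).lqNorm_mul_add hlocal)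

end Holmstedt
section Reiteration

variable {F : Type*} [AddCommGroup F] {M₀ M₁ : F → ℝ≥0∞} {x : ℤ → ℝ} {θ θ₀ θ₁ : ℝ}
  {q₁ r r₀ r₁ : ℝ≥0∞} {a a₁ b b₀ b₁ c ρ : ℝ → ℝ} {B : ℤ → ℝ≥0∞}

theorem LogGrid.geomGrowing_div_mul_mul_rpow_mul (hx : LogGrid x) (ha : HasPotterIndex a 0)
    (hb : HasPotterIndex b 0) (hθ : θ < 1) :
    GeomGrowing fun k => ENNReal.ofReal (b (x k) / a (x k)) *
      (ENNReal.ofReal (x k) * ENNReal.ofReal (x k ^ (-θ) * a (x k))) := by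
  convert hx.geomGrowing_mul_rpow_mul hb hθ using 2 with k
  have hxk := hx.pos k
  have hak := ha.pos _ hxk
  have hbk := hb.pos _ hxk
  rw [← ENNReal.ofReal_mul (by positivity), ← ENNReal.ofReal_mul (by positivity),
    ← ENNReal.ofReal_mul (by positivity)]
  congr 1
  field_simp

theorem LogGrid.geomGrowing_comp_mul_mul_of_comparable (hx : LogGrid x)
    (ha : HasPotterIndex a 0) (hb : HasPotterIndex b 0) {σ : ℝ} (hρ : HasPotterIndex ρ σ)
    (hσ : 0 < σ) (hθ : θ < 1) (hB : B ∼ fun k => ENNReal.ofReal (b (x k))) :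
    GeomGrowing fun k => ENNReal.ofReal (ρ (x k) ^ (-θ) * a (ρ (x k))) *
      (ENNReal.ofReal (ρ (x k)) * B k) := by
  have hgrow := hx.geomGrowing (((ha.id_rpow_mul (-θ)).comp hρ).mul (hρ.mul hb)) (by nlinarith)
  refine hgrow.of_comparable (Comparable.trans ?_ (Comparable.rfl.mul (.mul .rfl hB.symm)))
  convert Comparable.rfl using 2 with k
  have hρk := hρ.pos _ (hx.pos k)
  have hak := ha.pos _ hρk
  rw [← ENNReal.ofReal_mul hρk.le, ← ENNReal.ofReal_mul (by positivity)]

theorem LogGrid.mul_mul_rpow_mul_comparable (hx : LogGrid x) (ha₁ : HasPotterIndex a₁ 0)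
    (hb₀ : HasPotterIndex b₀ 0) (hc : HasPotterIndex c 0)
    (hρ : ∀ t, ρ t = t ^ (θ₁ - θ₀) * (b₀ t / c t))
    (hB : B ∼ fun k => ENNReal.ofReal (c (x k) / a₁ (x k))) :
    (fun k => ENNReal.ofReal (ρ (x k)) * B k * ENNReal.ofReal (x k ^ (-θ₁) * a₁ (x k))) ∼
      fun k => ENNReal.ofReal (x k ^ (-θ₀) * b₀ (x k)) := by
  convert (Comparable.rfl.mul hB).mul .rfl using 2 with k
  have hxk := hx.pos k
  have ha₁k := ha₁.pos _ hxk
  have hck := hc.pos _ hxk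
  have hb₀k := hb₀.pos _ hxk
  rw [hρ, ← ENNReal.ofReal_mul (by positivity), ← ENNReal.ofReal_mul (by positivity),
    Real.rpow_sub hxk, Real.rpow_neg hxk.le, Real.rpow_neg hxk.le]
  congr 1
  field_simp

theorem normK_normK_normL_comparable (h₀ : IsQuasiSeminorm M₀) (h₁ : IsQuasiSeminorm M₁)
    (hx : LogGrid x) (hρx : LogGrid fun k => ρ (x k)) (hθ₀ : 0 < θ₀) (hθ₀₁ : θ₀ < θ₁)
    (hθ₁ : θ₁ < 1) (hθ : θ < 1) (hq₁ : q₁ ≠ 0) (hr : r ≠ 0) (hr₀ : r₀ ≠ 0) (hr₁ : r₁ ≠ 0)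
    (ha : HasPotterIndex a 0) (ha₁ : HasPotterIndex a₁ 0) (hb₀ : HasPotterIndex b₀ 0)
    (hb₁ : HasPotterIndex b₁ 0) (hc : HasPotterIndex c 0)
    (hctail : (fun k => lqNorm r₁ (Ici k) fun j => ENNReal.ofReal (b₁ (x j) / a₁ (x j))) ∼
      fun k => ENNReal.ofReal (c (x k) / a₁ (x k)))
    (hρ : ∀ t, ρ t = t ^ (θ₁ - θ₀) * (b₀ t / c t)) (hρ_index : HasPotterIndex ρ (θ₁ - θ₀)) :
    normK (normK M₀ M₁ θ₀ r₀ b₀) (normL M₀ M₁ θ₁ r₁ q₁ b₁ a₁) θ r a ∼ fun f =>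
      lqNorm r univ fun k => ENNReal.ofReal (ρ (x k) ^ (-θ) * a (ρ (x k))) *
        lqNorm r₀ (Iic k) fun j => ENNReal.ofReal (x j ^ (-θ₀) * b₀ (x j)) * Kf M₀ M₁ (x j) f := by
  have houter := normK_comparable hρx (normK M₀ M₁ θ₀ r₀ b₀) (normL M₀ M₁ θ₁ r₁ q₁ b₁ a₁) θ hr ha
  have hinner := (normK_comparable hx M₀ M₁ θ₀ hr₀ hb₀).lqNorm_mul_Kf
    (normL_comparable hx M₀ M₁ θ₁ hr₁ hq₁ hb₁ ha₁) r
    (fun k => ENNReal.ofReal (ρ (x k) ^ (-θ) * a (ρ (x k)))) fun k => ρ (x k)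
  have hca₁ : HasPotterIndex (fun t => c t / a₁ t) 0 := by simpa using hc.div ha₁
  refine houter.trans (hinner.trans (lqNorm_mul_Kf_comparable h₀ h₁ hx hr hr₁ hr₀ hq₁
    (hx.geomDecaying_rpow_mul hb₀ hθ₀) (fun _ => ofReal_ne_top)
    (hx.geomGrowing_mul_rpow_mul hb₀ (hθ₀₁.trans hθ₁))
    (hx.geomDecaying_rpow_mul ha₁ (hθ₀.trans hθ₀₁)) (hx.geomGrowing_mul_rpow_mul ha₁ hθ₁)
    (hx.geomGrowing_div_mul_mul_rpow_mul ha₁ hb₁ hθ₁)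
    (hx.geomGrowing hρ_index (sub_pos.2 hθ₀₁))
    (hx.geomGrowing_comp_mul_mul_of_comparable ha hca₁ hρ_index (sub_pos.2 hθ₀₁) hθ hctail)
    (hx.mul_mul_rpow_mul_comparable ha₁ hb₀ hc hρ hctail)))

theorem GeomDecaying.lqNorm_mul_lqNorm_Iic_comparable {p q : ℝ≥0∞} {v : ℤ → ℝ≥0∞}
    (hv : GeomDecaying v) (hp : p ≠ 0) (hq : q ≠ 0) :
    (fun y => lqNorm q univ fun k => v k * lqNorm p (Iic k) y) ∼
      fun y => lqNorm q univ fun k => v k * y k :=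
  ⟨hv.hardy hp hq, .of_le fun _ => lqNorm_mono fun _ _ =>
    mul_le_mul_right (le_lqNorm hp (mem_Iic.2 le_rfl)) _⟩

theorem rpow_mul_rpow_div_rpow_neg_mul {t β κ : ℝ} (ht : 0 < t) (hβ : 0 < β) (hκ : 0 < κ)
    (θ θ₀ θ₁ : ℝ) :
    (t ^ (θ₁ - θ₀) * (β / κ)) ^ (-θ) * t ^ (-θ₀) * β =
      t ^ (-((1 - θ) * θ₀ + θ * θ₁)) * (β ^ (1 - θ) * κ ^ θ) := by
  have ht' : t ^ (-((1 - θ) * θ₀ + θ * θ₁)) = t ^ ((θ₁ - θ₀) * -θ) * t ^ (-θ₀) := by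
    rw [← Real.rpow_add ht]
    ring_nf
  rw [Real.mul_rpow (by positivity) (by positivity), ← Real.rpow_mul ht.le, ht',
    Real.div_rpow hβ.le hκ.le, Real.rpow_sub hβ, Real.rpow_one, Real.rpow_neg hβ.le,
    Real.rpow_neg hκ.le]
  field_simp

theorem lqNorm_lqNorm_Kf_comparable_normK (hx : LogGrid x) (hθ₀₁ : θ₀ < θ₁) (hθ : 0 < θ)
    (hr : r ≠ 0) (hr₀ : r₀ ≠ 0) (ha : HasPotterIndex a 0) (hb₀ : HasPotterIndex b₀ 0)
    (hc : HasPotterIndex c 0) (hρ : ∀ t, ρ t = t ^ (θ₁ - θ₀) * (b₀ t / c t))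
    (hρ_index : HasPotterIndex ρ (θ₁ - θ₀)) :
    (fun f => lqNorm r univ fun k => ENNReal.ofReal (ρ (x k) ^ (-θ) * a (ρ (x k))) *
        lqNorm r₀ (Iic k) fun j => ENNReal.ofReal (x j ^ (-θ₀) * b₀ (x j)) * Kf M₀ M₁ (x j) f) ∼
      normK M₀ M₁ ((1 - θ) * θ₀ + θ * θ₁) r fun t => b₀ t ^ (1 - θ) * c t ^ θ * a (ρ t) := by
  have hv := hx.geomDecaying ((ha.id_rpow_mul (-θ)).comp hρ_index)
    (mul_neg_of_neg_of_pos (neg_neg_of_pos hθ) (sub_pos.2 hθ₀₁))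
  have hweight : HasPotterIndex (fun t => b₀ t ^ (1 - θ) * c t ^ θ * a (ρ t)) 0 := by
    simpa using ((hb₀.rpow (1 - θ)).mul (hc.rpow θ)).mul (ha.comp hρ_index)
  refine ((hv.lqNorm_mul_lqNorm_Iic_comparable hr₀ hr).comp fun (f : F) j =>
    ENNReal.ofReal (x j ^ (-θ₀) * b₀ (x j)) * Kf M₀ M₁ (x j) f).trans ?_
  convert (normK_comparable hx M₀ M₁ _ hr hweight).symm using 4 with f k
  have hxk := hx.pos k
  have hbk := hb₀.pos _ hxk
  have hck := hc.pos _ hxk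
  have hak := ha.pos _ (hρ_index.pos _ hxk)
  have hpow := rpow_mul_rpow_div_rpow_neg_mul hxk hbk hck θ θ₀ θ₁
  rw [← mul_assoc, ← ENNReal.ofReal_mul (by have := hρ_index.pos _ hxk; positivity)]
  rw [← hρ] at hpow
  congr 2
  linear_combination a (ρ (x k)) * hpow

theorem lqNorm_lqNorm_Kf_comparable_normL (hx : LogGrid x) (hr : r ≠ 0) (hr₀ : r₀ ≠ 0)
    (ha : HasPotterIndex a 0) (hb₀ : HasPotterIndex b₀ 0) {σ : ℝ} (hρ : HasPotterIndex ρ σ) :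
    (fun f => lqNorm r univ fun k => ENNReal.ofReal (ρ (x k) ^ (-0 : ℝ) * a (ρ (x k))) *
        lqNorm r₀ (Iic k) fun j => ENNReal.ofReal (x j ^ (-θ₀) * b₀ (x j)) * Kf M₀ M₁ (x j) f) ∼
      normL M₀ M₁ θ₀ r r₀ (fun t => b₀ t * a (ρ t)) b₀ := by
  have hweight : HasPotterIndex (fun t => b₀ t * a (ρ t)) 0 := by
    simpa using hb₀.mul (ha.comp hρ)
  have hcancel : ∀ k, b₀ (x k) * a (ρ (x k)) / b₀ (x k) = a (ρ (x k)) := fun k =>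
    mul_div_cancel_left₀ _ (hb₀.pos _ (hx.pos k)).ne'
  simpa only [limitingNorm, hcancel, neg_zero, Real.rpow_zero, one_mul] using
    (normL_comparable hx M₀ M₁ θ₀ hr hr₀ hweight hb₀).symm

theorem hasPotterIndex_mul_LqNorm_Ioi (hr₁ : r₁ ≠ 0) (ha₁ : HasPotterIndex a₁ 0)
    (hb₁ : HasPotterIndex b₁ 0)
    (hfin : LqNorm r₁ (Ioi 1) (svWgt r₁ fun s => b₁ s / a₁ s) ≠ ∞)
    (hc : ∀ t, c t = a₁ t * (LqNorm r₁ (Ioi t) (svWgt r₁ fun s => b₁ s / a₁ s)).toReal) :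
    HasPotterIndex c 0 := by
  have hβ : HasPotterIndex (fun s => b₁ s / a₁ s) 0 := by simpa using hb₁.div ha₁
  rw [LqNorm_Ioi_svWgt hr₁ _ one_pos] at hfin
  have h := ha₁.mul (hβ.toReal_tailNorm hr₁ hfin)
  rw [add_zero] at h
  exact h.congr fun t ht => by rw [hc, LqNorm_Ioi_svWgt hr₁ _ ht]

theorem LogGrid.lqNorm_Ici_div_comparable (hx : LogGrid x) (hr₁ : r₁ ≠ 0)
    (ha₁ : HasPotterIndex a₁ 0) (hb₁ : HasPotterIndex b₁ 0)
    (hfin : LqNorm r₁ (Ioi 1) (svWgt r₁ fun s => b₁ s / a₁ s) ≠ ∞)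
    (hc : ∀ t, c t = a₁ t * (LqNorm r₁ (Ioi t) (svWgt r₁ fun s => b₁ s / a₁ s)).toReal) :
    (fun k => lqNorm r₁ (Ici k) fun j => ENNReal.ofReal (b₁ (x j) / a₁ (x j))) ∼
      fun k => ENNReal.ofReal (c (x k) / a₁ (x k)) := by
  have hβ : HasPotterIndex (fun s => b₁ s / a₁ s) 0 := by simpa using hb₁.div ha₁
  rw [LqNorm_Ioi_svWgt hr₁ _ one_pos] at hfin
  convert hx.lqNorm_Ici_comparable hβ hfin using 3 with k
  rw [hc, mul_div_cancel_left₀ _ (ha₁.pos _ (hx.pos k)).ne',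
    LqNorm_Ioi_svWgt hr₁ _ (hx.pos k)]

theorem theorem18_general (h₀ : IsQuasiSeminorm M₀) (h₁ : IsQuasiSeminorm M₁)
    (hθ₀ : 0 < θ₀) (hθ₀₁ : θ₀ < θ₁) (hθ₁ : θ₁ < 1)
    (hq₁ : q₁ ≠ 0) (hr : r ≠ 0) (hr₁ : r₁ ≠ 0) (hr₀ : r₀ ≠ 0)
    (ha : HasPotterIndex a 0) (ha₁ : HasPotterIndex a₁ 0) (hb₀ : HasPotterIndex b₀ 0)
    (hb₁ : HasPotterIndex b₁ 0)
    (hfin : LqNorm r₁ (Ioi 1) (svWgt r₁ fun s => b₁ s / a₁ s) ≠ ∞)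
    (hc : ∀ t, c t = a₁ t * (LqNorm r₁ (Ioi t) (svWgt r₁ fun s => b₁ s / a₁ s)).toReal)
    (hρ : ∀ t, ρ t = t ^ (θ₁ - θ₀) * (b₀ t / c t)) :
    (∀ θ : ℝ, 0 < θ → θ < 1 →
      EquivNorms
        (normK (normK M₀ M₁ θ₀ r₀ b₀) (normL M₀ M₁ θ₁ r₁ q₁ b₁ a₁) θ r a)
        (normK M₀ M₁ ((1 - θ) * θ₀ + θ * θ₁) r
          fun t => b₀ t ^ (1 - θ) * c t ^ θ * a (ρ t))) ∧
      EquivNorms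
        (normK (normK M₀ M₁ θ₀ r₀ b₀) (normL M₀ M₁ θ₁ r₁ q₁ b₁ a₁) 0 r a)
        (normL M₀ M₁ θ₀ r r₀ (fun t => b₀ t * a (ρ t)) b₀) := by
  have hc_index := hasPotterIndex_mul_LqNorm_Ioi hr₁ ha₁ hb₁ hfin hc
  have hρ_index : HasPotterIndex ρ (θ₁ - θ₀) := by
    have h := hb₀.div hc_index
    rw [sub_zero] at h
    exact (h.id_rpow_mul (θ₁ - θ₀)).congr fun t _ => hρ t
  obtain ⟨Λ, hΛ, hρx⟩ := LogGrid.exists_comp_exp_int_mul hρ_index (sub_pos.2 hθ₀₁)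
  have hx := LogGrid.exp_int_mul hΛ
  have hmain (θ : ℝ) (hθ : θ < 1) :=
    normK_normK_normL_comparable h₀ h₁ hx hρx hθ₀ hθ₀₁ hθ₁ hθ hq₁ hr hr₀ hr₁ ha ha₁ hb₀ hb₁
      hc_index (hx.lqNorm_Ici_div_comparable hr₁ ha₁ hb₁ hfin hc) hρ hρ_index
  have hK (θ : ℝ) (hθ : 0 < θ) :=
    lqNorm_lqNorm_Kf_comparable_normK (M₀ := M₀) (M₁ := M₁) hx hθ₀₁ hθ hr hr₀ ha hb₀ hc_index hρ
      hρ_index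
  have hL := lqNorm_lqNorm_Kf_comparable_normL (M₀ := M₀) (M₁ := M₁) (θ₀ := θ₀) hx hr hr₀ ha hb₀
    hρ_index
  exact ⟨fun θ hθ hθ_lt_one => ((hmain θ hθ_lt_one).trans (hK θ hθ)).equivNorms,
    ((hmain 0 zero_lt_one).trans hL).equivNorms⟩

end Reiteration

theorem theorem18
    (A₀ A₁ : QuasiBanach E)
    (hne : ∃ x : E, x ≠ 0 ∧ A₀.N x ≠ ∞ ∧ A₁.N x ≠ ∞)
    (θ₀ θ₁ : ℝ) (hθ₀ : 0 < θ₀) (hθ₀₁ : θ₀ < θ₁) (hθ₁ : θ₁ < 1)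
    (q₁ r r₁ r₀ : ℝ≥0∞) (hq₁ : 0 < q₁) (hr : 0 < r) (hr₁ : 0 < r₁) (hr₀ : 0 < r₀)
    (a a₁ b₀ b₁ : ℝ → ℝ)
    (h_sv_a : SlowlyVarying a)
    (h_sv_a₁ : SlowlyVarying a₁)
    (h_sv_b₀ : SlowlyVarying b₀)
    (h_sv_b₁ : SlowlyVarying b₁)
    (hfin : LqNorm r₁ (Ioi 1) (svWgt r₁ (fun s => b₁ s / a₁ s)) ≠ ∞)
    (c₁ ρ : ℝ → ℝ)
    (hc₁ : ∀ t, c₁ t = a₁ t * (LqNorm r₁ (Ioi t) (svWgt r₁ (fun s => b₁ s / a₁ s))).toReal)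
    (hρ : ∀ t, ρ t = t ^ (θ₁ - θ₀) * (b₀ t / c₁ t)) :
    (∀ θ : ℝ, 0 < θ → θ < 1 →
      EquivNorms
        (normK (normK A₀.N A₁.N θ₀ r₀ b₀) (normL A₀.N A₁.N θ₁ r₁ q₁ b₁ a₁) θ r a)
        (normK A₀.N A₁.N ((1 - θ) * θ₀ + θ * θ₁) r
          (fun t => b₀ t ^ (1 - θ) * c₁ t ^ θ * a (ρ t)))) ∧
    (LqNorm r (Ioi 1) (svWgt r (fun s => a s)) ≠ ∞ →
      EquivNorms
        (normK (normK A₀.N A₁.N θ₀ r₀ b₀) (normL A₀.N A₁.N θ₁ r₁ q₁ b₁ a₁) 0 r a)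
        (normL A₀.N A₁.N θ₀ r r₀ (fun t => b₀ t * a (ρ t)) b₀)) := by
  obtain ⟨hinterior, hendpoint⟩ := theorem18_general A₀.isQuasiSeminorm A₁.isQuasiSeminorm
    hθ₀ hθ₀₁ hθ₁ hq₁.ne' hr.ne' hr₁.ne' hr₀.ne' h_sv_a.hasPotterIndex h_sv_a₁.hasPotterIndex
    h_sv_b₀.hasPotterIndex h_sv_b₁.hasPotterIndex hfin hc₁ hρ
  exact ⟨hinterior, fun _ => hendpoint⟩

end
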